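/- arXiv:1612.03295 — 2 statements merged into one kernel-verified Lean document; each statement's English description precedes it below -/
import Mathlib

section
/- Let w be the unique radial positive solution of Δw − w + w³ = 0 in ℝ², let h ∈ C²(ℝ²) be homogeneous of degree p ≥ 2 with H(y) = ∫ h(x+y)w² having a unique critical point y₀, let ψ₁ be the unique solution of ∇ψ₁(0) = 0 and (−Δ+1−3w²)ψ₁ = −2w³/∫w⁴ − 2h(x+y₀)w/(p∫h(x+y₀)w²) in ℝ², and let ψ₂ = −(1/2)(w + x·∇w). Then ∫_{ℝ²} w ψ₁ = 0 and ∫_{ℝ²} w ψ₂ = 0. -/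
noncomputable section
open MeasureTheory Filter Real Set
open scoped RealInnerProductSpace Topology

abbrev R2 : Type := EuclideanSpace ℝ (Fin 2)

/-- The Laplacian of `f : ℝ² → ℝ`. -/
def lap (f : R2 → ℝ) (x : R2) : ℝ :=
  ∑ i : Fin 2, fderiv ℝ (fun y => fderiv ℝ f y (EuclideanSpace.single i 1)) x
    (EuclideanSpace.single i 1)

/-- The linearized operator `L = -Δ + (1 - 3 w²)` applied to `f`. -/
def Lop (w f : R2 → ℝ) (x : R2) : ℝ := -lap f x + (1 - 3 * (w x) ^ 2) * f x

/-- `x · ∇f`. -/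
def xgrad (f : R2 → ℝ) (x : R2) : ℝ := ⟪x, gradient f x⟫

/-- First partial derivative `∂f/∂x₁`. -/
def pd1 (f : R2 → ℝ) (x : R2) : ℝ := fderiv ℝ f x (EuclideanSpace.single 0 1)

/-- `w` is the (radial positive) ground state of `Δw - w + w³ = 0` in `ℝ²`, `w ∈ H¹`. -/
structure IsGroundState (w : R2 → ℝ) : Prop where
  smooth : ContDiff ℝ 2 w
  pos : ∀ x, 0 < w x
  radial : ∀ x y : R2, ‖x‖ = ‖y‖ → w x = w y
  eqn : ∀ x, lap w x - w x + (w x) ^ 3 = 0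
  sqInt : Integrable fun x => (w x) ^ 2
  quarticInt : Integrable fun x => (w x) ^ 4
  gradSqInt : Integrable fun x => ‖gradient w x‖ ^ 2

/-- `h` is homogeneous of degree `p`. -/
def Homog (h : R2 → ℝ) (p : ℝ) : Prop :=
  ∀ t : ℝ, 0 < t → ∀ x : R2, h (t • x) = t ^ p * h x

/-- `H(y) = ∫ h(x+y) w(x)² dx`. -/
def Hfun (h w : R2 → ℝ) (y : R2) : ℝ := ∫ x, h (x + y) * (w x) ^ 2

/-- Determinant of the Hessian of `H` at `y`. -/
def hessDet (H : R2 → ℝ) (y : R2) : ℝ :=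
  (fderiv ℝ (fun z => fderiv ℝ H z (EuclideanSpace.single 0 1)) y (EuclideanSpace.single 0 1)) *
    (fderiv ℝ (fun z => fderiv ℝ H z (EuclideanSpace.single 1 1)) y (EuclideanSpace.single 1 1)) -
  (fderiv ℝ (fun z => fderiv ℝ H z (EuclideanSpace.single 0 1)) y (EuclideanSpace.single 1 1)) *
    (fderiv ℝ (fun z => fderiv ℝ H z (EuclideanSpace.single 1 1)) y (EuclideanSpace.single 0 1))

/-- The Gross–Pitaevskii energy functional. -/
def GPe (V : R2 → ℝ) (a : ℝ) (u : R2 → ℝ) : ℝ :=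
  (∫ x, ‖gradient u x‖ ^ 2) + (∫ x, V x * (u x) ^ 2) - a / 2 * ∫ x, (u x) ^ 4

/-- Admissible class: `u ∈ H¹`, `∫ V u² < ∞`, `‖u‖₂ = 1`. -/
def Admissible (V : R2 → ℝ) (u : R2 → ℝ) : Prop :=
  Integrable (fun x => (u x) ^ 2) ∧ Integrable (fun x => ‖gradient u x‖ ^ 2) ∧
    Integrable (fun x => V x * (u x) ^ 2) ∧ (∫ x, (u x) ^ 2) = 1

/-- `e(a)`, the ground state energy. -/
def gpInf (V : R2 → ℝ) (a : ℝ) : ℝ := sInf (GPe V a '' {u | Admissible V u})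

/-- `u` is a positive minimizer of `e(a)`. -/
def IsPosMinimizer (V : R2 → ℝ) (a : ℝ) (u : R2 → ℝ) : Prop :=
  Admissible V u ∧ GPe V a u = gpInf V a ∧ ∀ x, 0 < u x

/-- `x0` is the unique maximum point of `u`. -/
def IsUniqueMaxPt (u : R2 → ℝ) (x0 : R2) : Prop :=
  IsMaxOn u univ x0 ∧ ∀ z, IsMaxOn u univ z → z = x0

/-- The Lagrange multiplier `μ_a = e(a) - (a/2)∫u⁴`. -/
def lagrangeMul (V : R2 → ℝ) (a : ℝ) (u : R2 → ℝ) : ℝ :=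
  gpInf V a - a / 2 * ∫ x, (u x) ^ 4

/-- A bounded function on `ℝ²`. -/
def BddFun (f : R2 → ℝ) : Prop := ∃ M, ∀ x, |f x| ≤ M


lemma ode_decay (u : ℝ → ℝ) (hu : ContDiff ℝ 2 u) (pos : ∀ r, 0 < u r)
    (ode : ∀ r, 0 < r → deriv (deriv u) r + deriv u r / r = u r - u r ^ 3)
    (i1 : IntegrableOn (fun r => u r ^ 2) (Ioi 1))
    (i2 : IntegrableOn (fun r => deriv u r ^ 2) (Ioi 1)) :
    ∃ R C, ∀ r, R ≤ r → u r ≤ C * exp (-r / 2) ∧ |deriv u r| ≤ C * exp (-r / 2) := by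
  have hd : ∀ r, HasDerivAt u (deriv u r) r := fun r =>
    ((hu.differentiable (by norm_num)) r).hasDerivAt
  have hu1 : ContDiff ℝ 1 (deriv u) := by
    have : ContDiff ℝ (1 + 1) u := by simpa [one_add_one_eq_two] using hu
    exact (contDiff_succ_iff_deriv.1 this).2.2
  have hd2 : ∀ r, HasDerivAt (deriv u) (deriv (deriv u) r) r := fun r =>
    ((hu1.differentiable (by norm_num)) r).hasDerivAt
  have hsq : ∀ r, HasDerivAt (fun r => u r ^ 2) (2 * u r * deriv u r) r := by
    intro r
    exact ((hd r).fun_pow 2).congr_deriv (by norm_num)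
  have hlim2 : Tendsto (fun r => u r ^ 2) atTop (𝓝 0) := by
    refine MeasureTheory.tendsto_zero_of_hasDerivAt_of_integrableOn_Ioi (a := 1)
      (f' := fun r => 2 * u r * deriv u r) (fun x _ => hsq x) ?_ i1
    refine (i1.add i2).mono' ?_ ?_
    · exact ((continuous_const.mul hu.continuous).mul hu1.continuous).aestronglyMeasurable
    · refine Eventually.of_forall fun r => ?_
      simp only [Real.norm_eq_abs, Pi.add_apply]
      rw [abs_le]
      constructor <;> nlinarith [sq_nonneg (u r + deriv u r), sq_nonneg (u r - deriv u r)]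
  obtain ⟨R, hR1, hR⟩ : ∃ R, 1 ≤ R ∧ ∀ r, R ≤ r → u r ^ 2 ≤ 1 / 2 := by
    have := hlim2.eventually (ge_mem_nhds (show (0:ℝ) < 1/2 by norm_num))
    obtain ⟨a, ha⟩ := eventually_atTop.1 this
    exact ⟨max a 1, le_max_right _ _, fun r hr => ha r ((le_max_left _ _).trans hr)⟩
  have hv : ∀ r, HasDerivAt (fun r => r * deriv u r) (1 * deriv u r + r * deriv (deriv u) r) r :=
    fun r => (hasDerivAt_id r).mul (hd2 r)
  have hrhs : ∀ r, R ≤ r → u r / 2 ≤ u r - u r ^ 3 := by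
    intro r hr
    nlinarith [hR r hr, pos r]
  have hvmono : MonotoneOn (fun r => r * deriv u r) (Ici R) := by
    refine monotoneOn_of_deriv_nonneg (convex_Ici R)
      (fun x _ => (hv x).continuousAt.continuousWithinAt)
      (fun x _ => (hv x).differentiableAt.differentiableWithinAt) ?_
    intro x hx
    rw [interior_Ici] at hx
    have hx' : R < x := hx
    have hx0 : 0 < x := by linarith
    rw [(hv x).deriv]
    have h1 := ode x hx0
    have h2 : 1 * deriv u x + x * deriv (deriv u) x = x * (u x - u x ^ 3) := by
      rw [← h1]; field_simp; ring
    rw [h2]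
    have := hrhs x hx'.le
    have := pos x
    have : 0 ≤ u x - u x ^ 3 := by linarith
    positivity
  have hneg : ∀ r, R ≤ r → deriv u r ≤ 0 := by
    intro r1 hr1
    by_contra hcon
    push Not at hcon
    have hmono : MonotoneOn u (Ici r1) := by
      refine monotoneOn_of_deriv_nonneg (convex_Ici r1)
        (fun x _ => (hd x).continuousAt.continuousWithinAt)
        (fun x _ => (hd x).differentiableAt.differentiableWithinAt) ?_
      intro x hx
      rw [interior_Ici] at hx
      have hx' : r1 < x := hx
      have h3 := hvmono (show r1 ∈ Ici R from hr1) (show x ∈ Ici R from hr1.trans hx'.le) hx'.le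
      simp only at h3
      have h4 : 0 < r1 * deriv u r1 := mul_pos (by linarith) hcon
      have h5 : 0 < x * deriv u x := by linarith
      exact (pos_of_mul_pos_right h5 (by linarith)).le
    have h6 : ∀ᶠ r in atTop, u r1 ^ 2 ≤ u r ^ 2 := by
      filter_upwards [eventually_ge_atTop r1] with r hr
      have := hmono (show r1 ∈ Ici r1 from self_mem_Ici) hr hr
      have := pos r1
      gcongr
    have := ge_of_tendsto hlim2 h6
    have := pos r1
    nlinarith
  have hconv : ∀ r, R ≤ r → u r / 2 ≤ deriv (deriv u) r := by
    intro r hr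
    have h1 := ode r (by linarith)
    have h2 : deriv u r / r ≤ 0 := div_nonpos_of_nonpos_of_nonneg (hneg r hr) (by linarith)
    have := hrhs r hr
    linarith
  have hE : ∀ r, HasDerivAt (fun r => deriv u r ^ 2 - u r ^ 2 / 2)
      (2 * deriv u r * deriv (deriv u) r - 2 * u r * deriv u r / 2) r := by
    intro r
    exact (((hd2 r).fun_pow 2).fun_sub ((hsq r).div_const 2)).congr_deriv (by norm_num)
  have hEanti : AntitoneOn (fun r => deriv u r ^ 2 - u r ^ 2 / 2) (Ici R) := by
    refine antitoneOn_of_deriv_nonpos (convex_Ici R)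
      (fun x _ => (hE x).continuousAt.continuousWithinAt)
      (fun x _ => (hE x).differentiableAt.differentiableWithinAt) ?_
    intro x hx
    rw [interior_Ici] at hx
    have hx' : R < x := hx
    rw [(hE x).deriv]
    nlinarith [hneg x hx'.le, hconv x hx'.le]
  have hEpos : ∀ r, R ≤ r → 0 ≤ deriv u r ^ 2 - u r ^ 2 / 2 := by
    intro r0 hr0
    by_contra hcon
    push Not at hcon
    have h6 : ∀ᶠ r in atTop, - 2 * (deriv u r0 ^ 2 - u r0 ^ 2 / 2) ≤ u r ^ 2 := by
      filter_upwards [eventually_ge_atTop r0] with r hr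
      have := hEanti (show r0 ∈ Ici R from hr0) (show r ∈ Ici R from hr0.trans hr) hr
      simp only at this
      nlinarith [sq_nonneg (deriv u r)]
    have := ge_of_tendsto hlim2 h6
    linarith
  have hlow : ∀ r, R ≤ r → u r / 2 ≤ - deriv u r := by
    intro r hr
    have h1 := hEpos r hr
    have h2 := hneg r hr
    have h3 := pos r
    refine abs_le_of_sq_le_sq' ?_ (by linarith) |>.2
    nlinarith
  have hexp : ∀ r, HasDerivAt (fun r => u r * exp (r / 2))
      (deriv u r * exp (r / 2) + u r * (exp (r / 2) * (1 / 2))) r := fun r =>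
    (hd r).mul (((hasDerivAt_id r).div_const 2).exp)
  have hexpanti : AntitoneOn (fun r => u r * exp (r / 2)) (Ici R) := by
    refine antitoneOn_of_deriv_nonpos (convex_Ici R)
      (fun x _ => (hexp x).continuousAt.continuousWithinAt)
      (fun x _ => (hexp x).differentiableAt.differentiableWithinAt) ?_
    intro x hx
    rw [interior_Ici] at hx
    have hx' : R < x := hx
    rw [(hexp x).deriv]
    nlinarith [hlow x hx'.le, exp_pos (x / 2)]
  have hub : ∀ r, R ≤ r → u r ≤ u R * exp (R / 2) * exp (-r / 2) := by
    intro r hr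
    have h1 := hexpanti (show R ∈ Ici R from self_mem_Ici) hr hr
    simp only at h1
    calc u r = u r * exp (r / 2) * exp (-r / 2) := by
          rw [mul_assoc, ← exp_add]; ring_nf; simp
      _ ≤ _ := by gcongr
  have hdmono : MonotoneOn (deriv u) (Ici R) := by
    refine monotoneOn_of_deriv_nonneg (convex_Ici R)
      (fun x _ => (hd2 x).continuousAt.continuousWithinAt)
      (fun x _ => (hd2 x).differentiableAt.differentiableWithinAt) ?_
    intro x hx
    rw [interior_Ici] at hx
    have hx' : R < x := hx
    linarith [hconv x hx'.le, pos x]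
  refine ⟨R + 1, u R * exp (R / 2) * exp (1 / 2), fun r hr => ⟨?_, ?_⟩⟩
  · refine (hub r (by linarith)).trans ?_
    have : 1 ≤ exp (1 / 2 : ℝ) := one_le_exp (by norm_num)
    have h0 := pos R
    have : u R * exp (R / 2) * 1 ≤ u R * exp (R / 2) * exp (1 / 2) := by gcongr
    rw [mul_one] at this
    gcongr
  · rw [abs_of_nonpos (hneg r (by linarith))]
    obtain ⟨c, hc, hc2⟩ := exists_deriv_eq_slope u (show r - 1 < r by linarith)
      hu.continuous.continuousOn (hu.differentiable (by norm_num)).differentiableOn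
    have h1 := hdmono (show c ∈ Ici R by simp only [mem_Ici]; linarith [hc.1])
      (show r ∈ Ici R by simp only [mem_Ici]; linarith) hc.2.le
    have h2 : deriv u c = u r - u (r - 1) := by rw [hc2]; simp
    have h3 := hub (r - 1) (by linarith)
    have h4 : exp (-(r - 1) / 2) = exp (1 / 2) * exp (-r / 2) := by
      rw [← exp_add]; ring_nf
    rw [h4] at h3
    linarith [pos r]

abbrev ee (i : Fin 2) : R2 := EuclideanSpace.single i 1

/-- radial profile -/
def prof (w : R2 → ℝ) (r : ℝ) : ℝ := w (r • ee 0)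

lemma norm_ee (i : Fin 2) : ‖ee i‖ = 1 := by simp [ee]

lemma prof_contDiff {w : R2 → ℝ} (hw : IsGroundState w) : ContDiff ℝ 2 (prof w) :=
  hw.smooth.comp (contDiff_id.smul contDiff_const)

lemma w_eq_prof {w : R2 → ℝ} (hw : IsGroundState w) (x : R2) : w x = prof w ‖x‖ := by
  apply hw.radial
  rw [norm_smul, norm_ee]; simp

lemma prof_hasDerivAt {w : R2 → ℝ} (hw : IsGroundState w) (r : ℝ) :
    HasDerivAt (prof w) (deriv (prof w) r) r :=
  (((prof_contDiff hw).differentiable (by norm_num)) r).hasDerivAt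

lemma fderiv_radial {w : R2 → ℝ} (hw : IsGroundState w) (x v : R2) (hx : x ≠ 0) :
    fderiv ℝ w x v = deriv (prof w) ‖x‖ * (‖x‖⁻¹ * ⟪x, v⟫) := by
  have h1 : w = fun x => prof w ‖x‖ := funext (w_eq_prof hw)
  have h2 : HasFDerivAt (fun x : R2 => ‖x‖) (‖x‖⁻¹ • innerSL ℝ x) x := by
    have := (hasStrictFDerivAt_norm_sq x).hasFDerivAt.sqrt (by simpa using hx)
    have h3 : (fun y : R2 => √(‖y‖ ^ 2)) = fun y => ‖y‖ := by
      funext y; exact Real.sqrt_sq (norm_nonneg y)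
    rw [h3, Real.sqrt_sq (norm_nonneg x)] at this
    refine this.congr_fderiv ?_
    ext v
    simp
    ring
  have h3 := (prof_hasDerivAt hw ‖x‖).comp_hasFDerivAt x h2
  have h4 : HasFDerivAt w (deriv (prof w) ‖x‖ • ‖x‖⁻¹ • innerSL ℝ x) x := by
    have h5 : w = prof w ∘ Norm.norm := h1
    rw [← h5] at h3
    exact h3
  rw [h4.fderiv]
  simp

lemma fderiv_norm_le {w : R2 → ℝ} (hw : IsGroundState w) (x : R2) (hx : x ≠ 0) :
    ‖fderiv ℝ w x‖ ≤ |deriv (prof w) ‖x‖| := by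
  refine ContinuousLinearMap.opNorm_le_bound _ (abs_nonneg _) fun v => ?_
  rw [fderiv_radial hw x v hx, Real.norm_eq_abs, abs_mul]
  have hx' : 0 < ‖x‖ := norm_pos_iff.2 hx
  gcongr
  rw [abs_mul, abs_inv, abs_norm, inv_mul_le_iff₀ hx']
  exact abs_real_inner_le_norm x v

lemma prof_deriv_le {w : R2 → ℝ} (hw : IsGroundState w) (x : R2) (hx : x ≠ 0) :
    |deriv (prof w) ‖x‖| ≤ ‖fderiv ℝ w x‖ := by
  have hx' : 0 < ‖x‖ := norm_pos_iff.2 hx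
  have h := (fderiv ℝ w x).le_opNorm x
  rw [fderiv_radial hw x x hx, real_inner_self_eq_norm_sq, Real.norm_eq_abs] at h
  have : ‖x‖⁻¹ * ‖x‖ ^ 2 = ‖x‖ := by field_simp
  rw [this, abs_mul, abs_norm] at h
  exact le_of_mul_le_mul_right h hx'

lemma prof_ode {w : R2 → ℝ} (hw : IsGroundState w) (r : ℝ) (hr : 0 < r) :
    deriv (deriv (prof w)) r + deriv (prof w) r / r = prof w r - prof w r ^ 3 := by
  have hd2 : ∀ s, HasDerivAt (deriv (prof w)) (deriv (deriv (prof w)) s) s := by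
    intro s
    have : ContDiff ℝ (1 + 1) (prof w) := by simpa [one_add_one_eq_two] using prof_contDiff hw
    exact (((contDiff_succ_iff_deriv.1 this).2.2.differentiable (by norm_num)) s).hasDerivAt
  have heq := hw.eqn (r • ee 0)
  have hfd : ∀ v : R2, Differentiable ℝ (fun y => fderiv ℝ w y v) := by
    intro v
    have : ContDiff ℝ 1 (fderiv ℝ w) := hw.smooth.fderiv_right (by norm_num)
    exact (this.clm_apply contDiff_const).differentiable (by norm_num)
  have hne : ∀ s : ℝ, (r • ee 0 + s • ee 1 : R2) ≠ 0 := by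
    intro s h
    have := congrArg (fun v : R2 => v 0) h
    simp [ee] at this
    exact hr.ne' this
  have key : ∀ v : R2, HasDerivAt (fun s : ℝ => fderiv ℝ w (r • ee 0 + s • v) v)
      (fderiv ℝ (fun y => fderiv ℝ w y v) (r • ee 0) v) 0 := by
    intro v
    have h1 : HasDerivAt (fun s : ℝ => (r • ee 0 + s • v : R2)) v 0 := by
      simpa using ((hasDerivAt_id (0:ℝ)).smul_const v).const_add (r • ee 0 : R2)
    have h2 := (hfd v (r • ee 0)).hasFDerivAt
    have h3 : HasFDerivAt (fun y => fderiv ℝ w y v) (fderiv ℝ (fun y => fderiv ℝ w y v) (r • ee 0))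
      (r • ee 0 + (0:ℝ) • v) := by simpa using h2
    exact h3.comp_hasDerivAt (0:ℝ) h1
  have k0 : fderiv ℝ (fun y => fderiv ℝ w y (ee 0)) (r • ee 0) (ee 0) = deriv (deriv (prof w)) r := by
    have h1 := key (ee 0)
    have h2 : (fun s : ℝ => fderiv ℝ w (r • ee 0 + s • ee 0) (ee 0)) =
        fun s => deriv (prof w) (r + s) := by
      funext s
      have h3 : HasDerivAt (fun t : ℝ => (t • ee 0 : R2)) (ee 0) (r + s) := by
        simpa using ((hasDerivAt_id (r + s)).smul_const (ee 0))
      have h4 := ((hw.smooth.differentiable (by norm_num)) ((r + s) • ee 0)).hasFDerivAt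
      have h5 := h4.comp_hasDerivAt (r + s) h3
      rw [← add_smul]
      exact h5.deriv.symm
    rw [h2] at h1
    have h6 : HasDerivAt (fun s => deriv (prof w) (r + s)) (deriv (deriv (prof w)) r) 0 := by
      have := hd2 (r + 0)
      have := this.comp_const_add r 0
      simpa using this
    exact h1.unique h6
  have k1 : fderiv ℝ (fun y => fderiv ℝ w y (ee 1)) (r • ee 0) (ee 1) = deriv (prof w) r / r := by
    have h1 := key (ee 1)
    have h2 : (fun s : ℝ => fderiv ℝ w (r • ee 0 + s • ee 1) (ee 1)) =
        fun s => s * (deriv (prof w) ‖r • ee 0 + s • ee 1‖ * ‖r • ee 0 + s • ee 1‖⁻¹) := by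
      funext s
      rw [fderiv_radial hw _ _ (hne s)]
      have : ⟪(r • ee 0 + s • ee 1 : R2), ee 1⟫ = s := by
        simp [inner_add_left, inner_smul_left, ee, EuclideanSpace.inner_single_left]
      rw [this]; ring
    rw [h2] at h1
    have hc : ContinuousAt (fun s : ℝ => deriv (prof w) ‖(r • ee 0 + s • ee 1 : R2)‖ *
        ‖(r • ee 0 + s • ee 1 : R2)‖⁻¹) 0 := by
      have hn : Continuous fun s : ℝ => ‖(r • ee 0 + s • ee 1 : R2)‖ := by fun_prop
      refine ContinuousAt.mul ?_ (hn.continuousAt.inv₀ (norm_ne_zero_iff.2 (hne 0)))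
      have hcd : Continuous (deriv (prof w)) :=
        continuous_iff_continuousAt.2 fun s => (hd2 s).continuousAt
      exact (hcd.comp hn).continuousAt
    have h6 : HasDerivAt (fun s : ℝ => s * (deriv (prof w) ‖(r • ee 0 + s • ee 1 : R2)‖ *
        ‖(r • ee 0 + s • ee 1 : R2)‖⁻¹)) (deriv (prof w) r / r) 0 := by
      rw [hasDerivAt_iff_tendsto_slope]
      have hv : (deriv (prof w) r / r) = (fun s : ℝ => deriv (prof w) ‖(r • ee 0 + s • ee 1 : R2)‖ *
        ‖(r • ee 0 + s • ee 1 : R2)‖⁻¹) 0 := by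
        simp only [zero_smul, add_zero, norm_smul, norm_ee, mul_one, Real.norm_eq_abs, abs_of_pos hr]
        rfl
      rw [hv]
      refine (hc.tendsto.mono_left nhdsWithin_le_nhds).congr' ?_
      filter_upwards [self_mem_nhdsWithin] with s hs
      have hs' : s ≠ 0 := hs
      simp only [slope_def_field]
      field_simp
      simp
    exact h1.unique h6
  unfold lap at heq
  rw [Fin.sum_univ_two] at heq
  change fderiv ℝ (fun y => fderiv ℝ w y (ee 0)) (r • ee 0) (ee 0) +
    fderiv ℝ (fun y => fderiv ℝ w y (ee 1)) (r • ee 0) (ee 1) - prof w r + prof w r ^ 3 = 0 at heq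
  rw [k0, k1] at heq
  linarith

lemma radial_int {f : ℝ → ℝ} (hf : Continuous f)
    (h : Integrable (fun x : R2 => f ‖x‖)) : IntegrableOn f (Ioi 1) := by
  have h1 := (integrable_fun_norm_addHaar (volume : Measure R2) (f := f)).1 h
  have h2 : IntegrableOn (fun y : ℝ => y ^ (Module.finrank ℝ R2 - 1) • f y) (Ioi 1) :=
    h1.mono_set (Ioi_subset_Ioi zero_le_one)
  refine Integrable.mono h2 hf.aestronglyMeasurable ?_
  refine (ae_restrict_iff' measurableSet_Ioi).2 (Eventually.of_forall fun r hr => ?_)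
  have hr' : (1:ℝ) < r := hr
  simp
  have : |f r| * 1 ≤ |f r| * |r| := by gcongr; exact hr'.le.trans (le_abs_self r)
  linarith

lemma ground_decay {w : R2 → ℝ} (hw : IsGroundState w) :
    ∃ C, ∀ x, |w x| ≤ C * exp (-‖x‖ / 2) ∧ ‖fderiv ℝ w x‖ ≤ C * exp (-‖x‖ / 2) := by
  have hcd : Continuous (deriv (prof w)) := by
    have : ContDiff ℝ (1 + 1) (prof w) := by simpa [one_add_one_eq_two] using prof_contDiff hw
    exact (contDiff_succ_iff_deriv.1 this).2.2.continuous
  have hcf : Continuous (fderiv ℝ w) := hw.smooth.continuous_fderiv (by norm_num)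
  have i1 : IntegrableOn (fun r => prof w r ^ 2) (Ioi 1) := by
    apply radial_int (f := fun r => prof w r ^ 2) ((prof_contDiff hw).continuous.pow 2)
    simpa only [← w_eq_prof hw] using hw.sqInt
  have i2 : IntegrableOn (fun r => deriv (prof w) r ^ 2) (Ioi 1) := by
    apply radial_int (f := fun r => deriv (prof w) r ^ 2) (hcd.pow 2)
    refine hw.gradSqInt.mono' ((hcd.comp continuous_norm).pow 2).aestronglyMeasurable ?_
    have : ∀ᵐ x : R2, x ≠ 0 := by
      simp [ae_iff]
    filter_upwards [this] with x hx
    have h1 := prof_deriv_le hw x hx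
    have h2 : ‖gradient w x‖ = ‖fderiv ℝ w x‖ := by simp [gradient]
    rw [h2, Real.norm_eq_abs, abs_pow]
    gcongr
  obtain ⟨R, C, hRC⟩ := ode_decay (prof w) (prof_contDiff hw) (fun r => hw.pos _)
    (prof_ode hw) i1 i2
  obtain ⟨C1, hC1⟩ := (isCompact_closedBall (0 : R2) (max R 1)).exists_bound_of_continuousOn
    (f := fun x => w x * exp (‖x‖ / 2)) (hw.smooth.continuous.mul (by fun_prop)).continuousOn
  obtain ⟨C2, hC2⟩ := (isCompact_closedBall (0 : R2) (max R 1)).exists_bound_of_continuousOn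
    (f := fun x => ‖fderiv ℝ w x‖ * exp (‖x‖ / 2)) (hcf.norm.mul (by fun_prop)).continuousOn
  have hmul : ∀ (a K : ℝ) (x : R2), a * exp (‖x‖ / 2) ≤ K → a ≤ K * exp (-‖x‖ / 2) := by
    intro a K x h
    calc a = a * exp (‖x‖ / 2) * exp (-‖x‖ / 2) := by
          rw [mul_assoc, ← exp_add]; ring_nf; simp
      _ ≤ _ := by gcongr
  refine ⟨max C (max C1 C2), fun x => ?_⟩
  have l1 := le_max_left C (max C1 C2)
  have l2 := le_max_right C (max C1 C2)
  have l3 := le_max_left C1 C2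
  have l4 := le_max_right C1 C2
  by_cases hx : ‖x‖ ≤ max R 1
  · have hx' : x ∈ Metric.closedBall (0 : R2) (max R 1) := by simpa using hx
    have h1 := hC1 x hx'
    have h2 := hC2 x hx'
    simp only [norm_mul, Real.norm_eq_abs, abs_exp, abs_norm] at h1 h2
    exact ⟨hmul _ _ _ (by linarith), hmul _ _ _ (by linarith)⟩
  · push Not at hx
    have hx0 : x ≠ 0 := by
      intro h
      have := le_max_right R 1
      rw [h, norm_zero] at hx
      linarith
    obtain ⟨h1, h2⟩ := hRC ‖x‖ ((le_max_left R 1).trans hx.le)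
    constructor
    · rw [abs_of_pos (hw.pos x), w_eq_prof hw x]
      exact h1.trans (by gcongr)
    · exact (fderiv_norm_le hw x hx0).trans (h2.trans (by gcongr))

lemma int_bound (N : ℕ) : Integrable (fun x : R2 => (1 + ‖x‖) ^ N * exp (-‖x‖ / 4)) := by
  have h0 : Integrable (fun x : R2 => (1 + ‖x‖) ^ (-(3:ℝ))) :=
    integrable_one_add_norm (by simp; norm_num)
  have h1 := h0.const_mul (4 ^ (N + 3) * ((N + 3).factorial : ℝ) * exp (1 / 4))
  refine h1.mono' (by fun_prop) (Eventually.of_forall fun x => ?_)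
  have hr : 0 ≤ ‖x‖ := norm_nonneg x
  have h2 := Real.pow_div_factorial_le_exp ((1 + ‖x‖) / 4) (by positivity) (N + 3)
  rw [Real.norm_eq_abs, abs_of_nonneg (by positivity), Real.rpow_neg (by positivity)]
  have h3 : (1 + ‖x‖) ^ (3:ℝ) = (1 + ‖x‖) ^ (3:ℕ) := by norm_cast
  rw [h3, ← div_eq_mul_inv, le_div_iff₀ (by positivity)]
  rw [div_le_iff₀ (by positivity), div_pow, div_le_iff₀ (by positivity)] at h2
  have h4 : exp ((1 + ‖x‖) / 4) = exp (1 / 4) * exp (‖x‖ / 4) := by rw [← exp_add]; ring_nf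
  have h5 : exp (‖x‖ / 4) * exp (-‖x‖ / 4) = 1 := by rw [← exp_add]; ring_nf; simp
  rw [h4] at h2
  calc (1 + ‖x‖) ^ N * exp (-‖x‖ / 4) * (1 + ‖x‖) ^ 3
      = (1 + ‖x‖) ^ (N + 3) * exp (-‖x‖ / 4) := by ring
    _ ≤ (exp (1 / 4) * exp (‖x‖ / 4) * ((N + 3).factorial : ℝ) * 4 ^ (N + 3)) * exp (-‖x‖ / 4) := by
        gcongr
    _ = 4 ^ (N + 3) * ((N + 3).factorial : ℝ) * exp (1 / 4) * (exp (‖x‖ / 4) * exp (-‖x‖ / 4)) := by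
        ring
    _ = _ := by rw [h5, mul_one]

/-- polynomial growth, continuous -/
def Slow (q : R2 → ℝ) : Prop := Continuous q ∧ ∃ (C : ℝ) (N : ℕ), 0 ≤ C ∧ ∀ x, |q x| ≤ C * (1 + ‖x‖) ^ N

lemma Slow.mul {q r : R2 → ℝ} (hq : Slow q) (hr : Slow r) : Slow (fun x => q x * r x) := by
  obtain ⟨c1, C, N, h0, h1⟩ := hq
  obtain ⟨c2, D, M, h2, h3⟩ := hr
  refine ⟨c1.mul c2, C * D, N + M, by positivity, fun x => ?_⟩
  rw [abs_mul, pow_add]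
  calc |q x| * |r x| ≤ (C * (1 + ‖x‖) ^ N) * (D * (1 + ‖x‖) ^ M) := by
        gcongr
        exacts [h1 x, h3 x]
    _ = _ := by ring

lemma Slow.add {q r : R2 → ℝ} (hq : Slow q) (hr : Slow r) : Slow (fun x => q x + r x) := by
  obtain ⟨c1, C, N, h0, h1⟩ := hq
  obtain ⟨c2, D, M, h2, h3⟩ := hr
  refine ⟨c1.add c2, C + D, N + M, by positivity, fun x => ?_⟩
  have hx := norm_nonneg x
  have e1 : (1 + ‖x‖) ^ N ≤ (1 + ‖x‖) ^ (N + M) := pow_le_pow_right₀ (by linarith) (by omega)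
  have e2 : (1 + ‖x‖) ^ M ≤ (1 + ‖x‖) ^ (N + M) := pow_le_pow_right₀ (by linarith) (by omega)
  calc |q x + r x| ≤ |q x| + |r x| := abs_add_le _ _
    _ ≤ C * (1 + ‖x‖) ^ N + D * (1 + ‖x‖) ^ M := add_le_add (h1 x) (h3 x)
    _ ≤ C * (1 + ‖x‖) ^ (N + M) + D * (1 + ‖x‖) ^ (N + M) := by gcongr
    _ = _ := by ring

lemma Slow.of_bdd {q : R2 → ℝ} (hq : Continuous q) (C : ℝ) (h : ∀ x, |q x| ≤ C) : Slow q :=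
  ⟨hq, C, 0, (abs_nonneg _).trans (h 0), by simpa using h⟩

/-- C¹ with exponentially decaying value and derivative -/
def Dec (w : R2 → ℝ) : Prop := ContDiff ℝ 1 w ∧ ∃ C, 0 ≤ C ∧
  ∀ x, |w x| ≤ C * exp (-‖x‖ / 2) ∧ ‖fderiv ℝ w x‖ ≤ C * exp (-‖x‖ / 2)

lemma Dec.slow {w : R2 → ℝ} (hw : Dec w) : Slow w := by
  obtain ⟨h1, C, h0, h2⟩ := hw
  refine Slow.of_bdd h1.continuous C fun x => (h2 x).1.trans ?_
  have : exp (-‖x‖ / 2) ≤ 1 := exp_le_one_iff.2 (by linarith [norm_nonneg x])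
  nlinarith

lemma exp_scale (l : ℝ) (hl : 1 / 2 ≤ l) (x : R2) : exp (-‖l • x‖ / 2) ≤ exp (-‖x‖ / 4) := by
  rw [exp_le_exp, norm_smul, Real.norm_eq_abs, abs_of_nonneg (by linarith)]
  nlinarith [norm_nonneg x]

lemma Dec.integrable {w : R2 → ℝ} (hw : Dec w) {q : R2 → ℝ} (hq : Slow q) (k : ℕ) (l : ℝ)
    (hl : 1 / 2 ≤ l) : Integrable (fun x => q x * w (l • x) ^ (k + 1)) := by
  obtain ⟨cq, D, N, hD, hq⟩ := hq
  obtain ⟨h1, C, h0, h2⟩ := hw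
  refine ((int_bound N).const_mul (D * C ^ (k + 1))).mono' ?_ (Eventually.of_forall fun x => ?_)
  · exact (cq.mul ((h1.continuous.comp (continuous_const_smul l)).pow _)).aestronglyMeasurable
  · have h3 : |w (l • x)| ≤ C * exp (-‖x‖ / 4) :=
      (h2 _).1.trans (mul_le_mul_of_nonneg_left (exp_scale l hl x) h0)
    have h4 : |w (l • x)| ≤ C := by
      refine h3.trans ?_
      have : exp (-‖x‖ / 4) ≤ 1 := exp_le_one_iff.2 (by linarith [norm_nonneg x])
      nlinarith
    rw [Real.norm_eq_abs, abs_mul, abs_pow, pow_succ]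
    calc |q x| * (|w (l • x)| ^ k * |w (l • x)|)
        ≤ (D * (1 + ‖x‖) ^ N) * (C ^ k * (C * exp (-‖x‖ / 4))) := by
          gcongr
          exact hq x
      _ = _ := by ring

lemma scal {w : R2 → ℝ} (hw : Dec w) {q : R2 → ℝ} (hq : Slow q) (k : ℕ) :
    Integrable (fun x => q x * ((k + 1) * w x ^ k * fderiv ℝ w x x)) ∧
    HasDerivAt (fun l : ℝ => ∫ x, q x * w (l • x) ^ (k + 1))
      (∫ x, q x * ((k + 1) * w x ^ k * fderiv ℝ w x x)) 1 := by
  have hint := hw.integrable hq k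
  obtain ⟨cq, D, N, hD, hq⟩ := hq
  obtain ⟨h1, C, h0, h2⟩ := hw
  have hcf : Continuous (fderiv ℝ w) := h1.continuous_fderiv (by norm_num)
  have := hasDerivAt_integral_of_dominated_loc_of_deriv_le (μ := (volume : Measure R2))
    (F := fun (l : ℝ) x => q x * w (l • x) ^ (k + 1)) (x₀ := (1:ℝ))
    (F' := fun (l : ℝ) x => q x * ((k + 1) * w (l • x) ^ k * fderiv ℝ w (l • x) x))
    (s := Ioi (1 / 2))
    (bound := fun x => (D * (k + 1) * C ^ (k + 1)) * ((1 + ‖x‖) ^ (N + 1) * exp (-‖x‖ / 4)))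
    (Ioi_mem_nhds (by norm_num)) ?_ (hint 1 (by norm_num)) ?_ ?_
    ((int_bound (N + 1)).const_mul _) ?_
  · simpa using this
  · filter_upwards [Ioi_mem_nhds (show (1/2 : ℝ) < 1 by norm_num)] with l hl
    exact (hint l (le_of_lt hl)).aestronglyMeasurable
  · refine (cq.mul ((continuous_const.mul
      ((h1.continuous.comp (continuous_const_smul _)).pow _)).mul ?_)).aestronglyMeasurable
    exact (hcf.comp (continuous_const_smul _)).clm_apply continuous_id
  · refine Eventually.of_forall fun x l hl => ?_
    have hl' : 1 / 2 ≤ l := le_of_lt hl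
    have h3 : ‖fderiv ℝ w (l • x)‖ ≤ C * exp (-‖x‖ / 4) :=
      (h2 _).2.trans (mul_le_mul_of_nonneg_left (exp_scale l hl' x) h0)
    have h4 : |w (l • x)| ≤ C := by
      refine (h2 _).1.trans ?_
      have : exp (-‖l • x‖ / 2) ≤ 1 := exp_le_one_iff.2 (by linarith [norm_nonneg (l • x)])
      nlinarith
    have h5 : |fderiv ℝ w (l • x) x| ≤ C * exp (-‖x‖ / 4) * (1 + ‖x‖) := by
      refine ((fderiv ℝ w (l • x)).le_opNorm x).trans ?_
      gcongr
      linarith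
    have hk : |((k:ℝ) + 1)| = k + 1 := abs_of_nonneg (by positivity)
    rw [Real.norm_eq_abs, abs_mul, abs_mul, abs_mul, abs_pow, hk]
    calc |q x| * (((k:ℝ) + 1) * |w (l • x)| ^ k * |fderiv ℝ w (l • x) x|)
        ≤ (D * (1 + ‖x‖) ^ N) * (((k:ℝ) + 1) * C ^ k * (C * exp (-‖x‖ / 4) * (1 + ‖x‖))) := by
          gcongr
          exact hq x
      _ = _ := by ring
  · refine Eventually.of_forall fun x l _ => ?_
    have e1 : HasDerivAt (fun t : ℝ => (t • x : R2)) x l := by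
      simpa using ((hasDerivAt_id l).smul_const x)
    have e2 := ((h1.differentiable (by norm_num)) (l • x)).hasFDerivAt.comp_hasDerivAt l e1
    have e3 := (e2.fun_pow (k + 1)).const_mul (q x)
    refine e3.congr_deriv ?_
    simp

lemma H_diff {w h : R2 → ℝ} (hw : Dec w) (hh : Slow h) (y0 : R2) :
    DifferentiableAt ℝ (Hfun h w) y0 := by
  obtain ⟨cq, D, N, hD, hq⟩ := hh
  obtain ⟨h1, C, h0, h2⟩ := hw
  have hcf : Continuous (fderiv ℝ w) := h1.continuous_fderiv (by norm_num)
  have hH : Hfun h w = fun y => ∫ x, h x * w (x - y) ^ 2 := by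
    funext y
    unfold Hfun
    rw [← integral_sub_right_eq_self _ y]
    simp
  rw [hH]
  have hexp : ∀ y ∈ Metric.ball y0 1, ∀ x : R2,
      exp (-‖x - y‖ / 2) ≤ exp ((‖y0‖ + 1) / 2) * exp (-‖x‖ / 4) := by
    intro y hy x
    rw [← exp_add, exp_le_exp]
    have e1 : ‖x‖ ≤ ‖x - y‖ + ‖y‖ := by simpa using norm_add_le (x - y) y
    have e2 : ‖y‖ ≤ ‖y - y0‖ + ‖y0‖ := by simpa using norm_add_le (y - y0) y0
    have e3 : ‖y - y0‖ < 1 := by simpa [dist_eq_norm] using hy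
    have := norm_nonneg x
    linarith
  have hwb : ∀ x, |w x| ≤ C := by
    intro x
    refine (h2 _).1.trans ?_
    have : exp (-‖x‖ / 2) ≤ 1 := exp_le_one_iff.2 (by linarith [norm_nonneg x])
    nlinarith
  have hm : ∀ y, AEStronglyMeasurable (fun x => h x * w (x - y) ^ 2) volume := fun y =>
    (cq.mul ((h1.continuous.comp (continuous_sub_right y)).pow 2)).aestronglyMeasurable
  have := hasFDerivAt_integral_of_dominated_of_fderiv_le (μ := (volume : Measure R2))
    (F := fun y x => h x * w (x - y) ^ 2) (x₀ := y0)
    (F' := fun y x => (h x * (2 * w (x - y))) • (-(fderiv ℝ w (x - y))))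
    (s := Metric.ball y0 1)
    (bound := fun x => (D * 2 * C * C * exp ((‖y0‖ + 1) / 2)) * ((1 + ‖x‖) ^ N * exp (-‖x‖ / 4)))
    (Metric.ball_mem_nhds _ one_pos) (Eventually.of_forall hm) ?_ ?_ ?_
    ((int_bound N).const_mul _) ?_
  · exact this.differentiableAt
  · refine ((int_bound N).const_mul (D * C * C * exp ((‖y0‖ + 1) / 2))).mono' (hm _)
      (Eventually.of_forall fun x => ?_)
    have e := hexp y0 (Metric.mem_ball_self one_pos) x
    have e3 : |w (x - y0)| ≤ C * (exp ((‖y0‖ + 1) / 2) * exp (-‖x‖ / 4)) :=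
      (h2 _).1.trans (by gcongr)
    rw [Real.norm_eq_abs, abs_mul, abs_pow, pow_two]
    calc |h x| * (|w (x - y0)| * |w (x - y0)|)
        ≤ (D * (1 + ‖x‖) ^ N) * (C * (C * (exp ((‖y0‖ + 1) / 2) * exp (-‖x‖ / 4)))) := by
          gcongr
          exacts [hq x, hwb _]
      _ = _ := by ring
  · refine Continuous.aestronglyMeasurable ?_
    have a1 := h1.continuous.comp (continuous_sub_right y0)
    have a2 := hcf.comp (continuous_sub_right y0)
    exact (cq.mul (continuous_const.mul a1)).smul a2.neg
  · refine Eventually.of_forall fun x y hy => ?_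
    have e := hexp y hy x
    have e3 : ‖fderiv ℝ w (x - y)‖ ≤ C * (exp ((‖y0‖ + 1) / 2) * exp (-‖x‖ / 4)) :=
      (h2 _).2.trans (by gcongr)
    rw [norm_smul, norm_neg, Real.norm_eq_abs, abs_mul, abs_mul, abs_two]
    calc |h x| * (2 * |w (x - y)|) * ‖fderiv ℝ w (x - y)‖
        ≤ (D * (1 + ‖x‖) ^ N) * (2 * C) * (C * (exp ((‖y0‖ + 1) / 2) * exp (-‖x‖ / 4))) := by
          gcongr
          exacts [hq x, hwb _]
      _ = _ := by ring
  · refine Eventually.of_forall fun x y _ => ?_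
    have e1 : HasFDerivAt (fun y : R2 => x - y) (-(ContinuousLinearMap.id ℝ R2)) y :=
      (hasFDerivAt_id y).const_sub x
    have e2 := ((h1.differentiable (by norm_num)) (x - y)).hasFDerivAt.comp y e1
    have e3 := (e2.pow 2).const_mul (h x)
    refine e3.congr_fderiv ?_
    ext v
    simp
    ring

/-- directional derivative -/
def dd (i : Fin 2) (f : R2 → ℝ) (x : R2) : ℝ := fderiv ℝ f x (ee i)

lemma lap_eq (f : R2 → ℝ) (x : R2) : lap f x = ∑ i : Fin 2, dd i (dd i f) x := rfl

lemma dd_contDiff {f : R2 → ℝ} (hf : ContDiff ℝ 2 f) (i : Fin 2) : ContDiff ℝ 1 (dd i f) := by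
  have : ContDiff ℝ 1 (fderiv ℝ f) := hf.fderiv_right (by norm_num)
  exact this.clm_apply contDiff_const

lemma dd_cont {f : R2 → ℝ} (hf : ContDiff ℝ 1 f) (i : Fin 2) : Continuous (dd i f) :=
  (hf.continuous_fderiv (by norm_num)).clm_apply continuous_const

lemma lap_cont {f : R2 → ℝ} (hf : ContDiff ℝ 2 f) : Continuous (lap f) := by
  have : lap f = fun x => ∑ i : Fin 2, dd i (dd i f) x := rfl
  rw [this]
  exact continuous_finsetSum _ fun i _ => dd_cont (dd_contDiff hf i) i

lemma dd_scale {f : R2 → ℝ} (c : ℝ) (i : Fin 2) :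
    dd i (fun x => f (c • x)) = fun x => c * dd i f (c • x) := by
  funext x
  unfold dd
  rw [fderiv_comp_smul]
  simp

lemma dd_const_mul {f : R2 → ℝ} (hf : Differentiable ℝ f) (c : ℝ) (i : Fin 2) :
    dd i (fun x => c * f x) = fun x => c * dd i f x := by
  funext x
  unfold dd
  rw [fderiv_const_mul (hf x)]
  simp

lemma lap_scale {f : R2 → ℝ} (hf : ContDiff ℝ 2 f) (c : ℝ) (x : R2) :
    lap (fun x => f (c • x)) x = c ^ 2 * lap f (c • x) := by
  rw [lap_eq, lap_eq, Finset.mul_sum]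
  refine Finset.sum_congr rfl fun i _ => ?_
  have h1 : Differentiable ℝ (fun x => dd i f (c • x)) :=
    ((dd_contDiff hf i).comp (contDiff_const_smul c)).differentiable (by norm_num)
  rw [dd_scale, dd_const_mul h1, dd_scale]
  ring

lemma dd_mul {f g : R2 → ℝ} (hf : Differentiable ℝ f) (hg : Differentiable ℝ g) (i : Fin 2) :
    dd i (fun x => f x * g x) = fun x => f x * dd i g x + g x * dd i f x := by
  funext x
  unfold dd
  rw [fderiv_fun_mul (hf x) (hg x)]
  simp

lemma dd_add {f g : R2 → ℝ} (hf : Differentiable ℝ f) (hg : Differentiable ℝ g) (i : Fin 2) :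
    dd i (fun x => f x + g x) = fun x => dd i f x + dd i g x := by
  funext x
  unfold dd
  rw [fderiv_fun_add (hf x) (hg x)]
  simp

lemma lap_mul {f g : R2 → ℝ} (hf : ContDiff ℝ 2 f) (hg : ContDiff ℝ 2 g) (x : R2) :
    lap (fun x => f x * g x) x =
      f x * lap g x + 2 * (∑ i : Fin 2, dd i f x * dd i g x) + g x * lap f x := by
  have df : Differentiable ℝ f := hf.differentiable (by norm_num)
  have dg : Differentiable ℝ g := hg.differentiable (by norm_num)
  have key : ∀ i : Fin 2, dd i (dd i (fun x => f x * g x)) x =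
      f x * dd i (dd i g) x + 2 * (dd i f x * dd i g x) + g x * dd i (dd i f) x := by
    intro i
    have ddf : Differentiable ℝ (dd i f) := (dd_contDiff hf i).differentiable (by norm_num)
    have ddg : Differentiable ℝ (dd i g) := (dd_contDiff hg i).differentiable (by norm_num)
    rw [dd_mul df dg, dd_add (df.fun_mul ddg) (dg.fun_mul ddf), dd_mul df ddg, dd_mul dg ddf]
    ring
  simp only [lap_eq, key, Fin.sum_univ_two]
  ring

lemma dd_support {f : R2 → ℝ} (hf : HasCompactSupport f) (i : Fin 2) :
    HasCompactSupport (dd i f) := by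
  refine (hf.fderiv ℝ).mono fun x hx => ?_
  simp only [Function.mem_support, dd] at hx ⊢
  intro h
  exact hx (by rw [h]; rfl)

lemma ibp_cs {φ ψ : R2 → ℝ} (hφ : ContDiff ℝ 2 φ) (hψ : ContDiff ℝ 2 ψ)
    (hc : HasCompactSupport φ) : ∫ x, φ x * lap ψ x = ∫ x, ψ x * lap φ x := by
  have dφ : Differentiable ℝ φ := hφ.differentiable (by norm_num)
  have dψ : Differentiable ℝ ψ := hψ.differentiable (by norm_num)
  have cφ := hφ.continuous
  have cψ := hψ.continuous
  have c1 : ∀ i, Continuous (dd i φ) := fun i => (dd_contDiff hφ i).continuous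
  have c2 : ∀ i, Continuous (dd i ψ) := fun i => (dd_contDiff hψ i).continuous
  have c3 : ∀ i, Continuous (dd i (dd i φ)) := fun i => dd_cont (dd_contDiff hφ i) i
  have c4 : ∀ i, Continuous (dd i (dd i ψ)) := fun i => dd_cont (dd_contDiff hψ i) i
  have I1 : ∀ i, Integrable (fun x => φ x * dd i (dd i ψ) x) := fun i =>
    (cφ.mul (c4 i)).integrable_of_hasCompactSupport hc.mul_right
  have I2 : ∀ i, Integrable (fun x => φ x * dd i ψ x) := fun i =>
    (cφ.mul (c2 i)).integrable_of_hasCompactSupport hc.mul_right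
  have I3 : ∀ i, Integrable (fun x => dd i φ x * dd i ψ x) := fun i =>
    ((c1 i).mul (c2 i)).integrable_of_hasCompactSupport (dd_support hc i).mul_right
  have I4 : ∀ i, Integrable (fun x => dd i φ x * ψ x) := fun i =>
    ((c1 i).mul cψ).integrable_of_hasCompactSupport (dd_support hc i).mul_right
  have I5 : ∀ i, Integrable (fun x => dd i (dd i φ) x * ψ x) := fun i =>
    ((c3 i).mul cψ).integrable_of_hasCompactSupport (dd_support (dd_support hc i) i).mul_right
  have key : ∀ i, ∫ x, φ x * dd i (dd i ψ) x = ∫ x, ψ x * dd i (dd i φ) x := by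
    intro i
    have e1 := integral_mul_fderiv_eq_neg_fderiv_mul_of_integrable (μ := (volume : Measure R2))
      (f := φ) (g := dd i ψ) (v := ee i) (I3 i) (I1 i) (I2 i) (fun x _ => dφ x)
      (fun x _ => (dd_contDiff hψ i).differentiable (by norm_num) x)
    have e2 := integral_mul_fderiv_eq_neg_fderiv_mul_of_integrable (μ := (volume : Measure R2))
      (f := dd i φ) (g := ψ) (v := ee i) (I5 i) (I3 i) (I4 i)
      (fun x _ => (dd_contDiff hφ i).differentiable (by norm_num) x) (fun x _ => dψ x)
    change ∫ x, φ x * dd i (dd i ψ) x = - ∫ x, dd i φ x * dd i ψ x at e1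
    change ∫ x, dd i φ x * dd i ψ x = - ∫ x, dd i (dd i φ) x * ψ x at e2
    rw [e1, e2, neg_neg]
    simp only [mul_comm]
  simp only [lap_eq, Finset.mul_sum]
  rw [integral_finsetSum _ fun i _ => I1 i, integral_finsetSum]
  · exact Finset.sum_congr rfl fun i _ => key i
  · intro i _
    simpa only [mul_comm] using I5 i

lemma ibp {W ψ : R2 → ℝ} (hW : ContDiff ℝ 2 W) (hψ : ContDiff ℝ 2 ψ) (M : ℝ) (hM : ∀ x, |ψ x| ≤ M)
    (i0 : Integrable W) (i1 : ∀ i, Integrable (dd i W)) (i2 : Integrable (lap W))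
    (i3 : Integrable (fun x => W x * lap ψ x)) :
    ∫ x, W x * lap ψ x = ∫ x, ψ x * lap W x := by
  have hM0 : 0 ≤ M := (abs_nonneg _).trans (hM 0)
  let η : ContDiffBump (0 : R2) := ⟨1, 2, by norm_num, by norm_num⟩
  have hη : ContDiff ℝ 2 (η : R2 → ℝ) := η.contDiff
  have hηc : HasCompactSupport (η : R2 → ℝ) := η.hasCompactSupport
  have hη1 : ∀ x, |η x| ≤ 1 := fun x => by
    rw [abs_of_nonneg η.nonneg]; exact η.le_one
  obtain ⟨K1, hK1⟩ : ∃ K, ∀ i x, |dd i η x| ≤ K := by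
    have : ∀ i, ∃ K, ∀ x, ‖dd i η x‖ ≤ K := fun i =>
      (dd_support hηc i).exists_bound_of_continuous (dd_contDiff hη i).continuous
    choose K hK using this
    refine ⟨max (K 0) (K 1), fun i x => (hK i x).trans ?_⟩
    fin_cases i
    · exact le_max_left _ _
    · exact le_max_right _ _
  obtain ⟨K2, hK2⟩ : ∃ K, ∀ x, ‖lap η x‖ ≤ K := by
    refine HasCompactSupport.exists_bound_of_continuous ?_ (lap_cont hη)
    have : lap η = fun x => dd 0 (dd 0 η) x + dd 1 (dd 1 η) x := by
      funext x; rw [lap_eq, Fin.sum_univ_two]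
    rw [this]
    exact (dd_support (dd_support hηc 0) 0).add (dd_support (dd_support hηc 1) 1)
  have hK10 : 0 ≤ K1 := (abs_nonneg _).trans (hK1 0 0)
  have hK20 : 0 ≤ K2 := (norm_nonneg _).trans (hK2 0)
  let c : ℕ → ℝ := fun n => ((n : ℝ) + 1)⁻¹
  have hc0 : ∀ n, 0 < c n := fun n => by positivity
  have hc1 : ∀ n, c n ≤ 1 := fun n => inv_le_one_of_one_le₀ (by linarith [n.cast_nonneg (α := ℝ)])
  let E : ℕ → R2 → ℝ := fun n x => η (c n • x)
  have hE : ∀ n, ContDiff ℝ 2 (E n) := fun n => hη.comp (contDiff_const_smul (c n))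
  have hEW : ∀ n, ContDiff ℝ 2 (fun x => E n x * W x) := fun n => (hE n).mul hW
  have hEc : ∀ n, HasCompactSupport (E n) := fun n => hηc.comp_smul (hc0 n).ne'
  have hEev : ∀ x, ∀ᶠ n in atTop, E n =ᶠ[𝓝 x] fun _ => 1 := by
    intro x
    have : ∀ᶠ n : ℕ in atTop, ‖x‖ < n := by
      obtain ⟨m, hm⟩ := exists_nat_gt ‖x‖
      filter_upwards [eventually_ge_atTop m] with n hn
      exact hm.trans_le (by exact_mod_cast hn)
    filter_upwards [this] with n hn
    have : ∀ᶠ y in 𝓝 x, ‖y‖ < n := continuous_norm.continuousAt.eventually_lt_const hn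
    filter_upwards [this] with y hy
    apply η.one_of_mem_closedBall
    simp only [Metric.mem_closedBall, dist_zero_right, norm_smul, Real.norm_eq_abs,
      abs_of_pos (hc0 n)]
    change ((n : ℝ) + 1)⁻¹ * ‖y‖ ≤ 1
    rw [inv_mul_le_iff₀ (by positivity)]
    linarith
  have L1 : Tendsto (fun n => ∫ x, E n x * W x * lap ψ x) atTop (𝓝 (∫ x, W x * lap ψ x)) := by
    refine tendsto_integral_of_dominated_convergence (fun x => ‖W x * lap ψ x‖) ?_ i3.norm ?_ ?_
    · exact fun n => (((hEW n).continuous).mul (lap_cont hψ)).aestronglyMeasurable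
    · refine fun n => Eventually.of_forall fun x => ?_
      rw [mul_assoc, norm_mul]
      have : ‖E n x‖ ≤ 1 := hη1 _
      nlinarith [norm_nonneg (W x * lap ψ x)]
    · refine Eventually.of_forall fun x => ?_
      refine tendsto_const_nhds.congr' ?_
      filter_upwards [hEev x] with n hn
      rw [hn.eq_of_nhds, one_mul]
  have L2 : Tendsto (fun n => ∫ x, ψ x * lap (fun x => E n x * W x) x) atTop
      (𝓝 (∫ x, ψ x * lap W x)) := by
    refine tendsto_integral_of_dominated_convergence
      (fun x => M * (|lap W x| + 2 * (K1 * |dd 0 W x| + K1 * |dd 1 W x|) + K2 * |W x|)) ?_ ?_ ?_ ?_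
    · exact fun n => (hψ.continuous.mul (lap_cont (hEW n))).aestronglyMeasurable
    · exact ((i2.abs.add ((((i1 0).abs.const_mul K1).add ((i1 1).abs.const_mul K1)).const_mul 2)).add
        (i0.abs.const_mul K2)).const_mul M
    · refine fun n => Eventually.of_forall fun x => ?_
      rw [lap_mul (hE n) hW, Fin.sum_univ_two, Real.norm_eq_abs, abs_mul]
      have a0 : |E n x| ≤ 1 := hη1 _
      have a1 : ∀ i, |dd i (E n) x| ≤ K1 := by
        intro i
        have : dd i (E n) x = c n * dd i η (c n • x) := congrFun (dd_scale (f := η) (c n) i) x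
        rw [this, abs_mul, abs_of_pos (hc0 n)]
        have := hK1 i (c n • x)
        nlinarith [hc0 n, hc1 n, abs_nonneg (dd i η (c n • x))]
      have a2 : |lap (E n) x| ≤ K2 := by
        have : lap (E n) x = c n ^ 2 * lap η (c n • x) := lap_scale hη (c n) x
        rw [this, abs_mul, abs_of_pos (by have := hc0 n; positivity)]
        have := hK2 (c n • x)
        rw [Real.norm_eq_abs] at this
        have h2 : c n ^ 2 ≤ 1 := pow_le_one₀ (hc0 n).le (hc1 n)
        nlinarith [abs_nonneg (lap η (c n • x))]
      refine mul_le_mul (hM x) ?_ (abs_nonneg _) hM0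
      refine (abs_add_le _ _).trans (add_le_add ((abs_add_le _ _).trans (add_le_add ?_ ?_)) ?_)
      · rw [abs_mul]
        nlinarith [abs_nonneg (lap W x)]
      · rw [abs_mul, abs_two]
        refine mul_le_mul_of_nonneg_left ((abs_add_le _ _).trans (add_le_add ?_ ?_)) (by norm_num)
        · rw [abs_mul]
          exact mul_le_mul_of_nonneg_right (a1 0) (abs_nonneg _)
        · rw [abs_mul]
          exact mul_le_mul_of_nonneg_right (a1 1) (abs_nonneg _)
      · rw [abs_mul, mul_comm]
        exact mul_le_mul_of_nonneg_right a2 (abs_nonneg _)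
    · refine Eventually.of_forall fun x => ?_
      refine tendsto_const_nhds.congr' ?_
      filter_upwards [hEev x] with n hn
      have e1 : (fun x => E n x * W x) =ᶠ[𝓝 x] W := by
        filter_upwards [hn] with y hy
        rw [hy, one_mul]
      have e2 : ∀ i, dd i (fun x => E n x * W x) =ᶠ[𝓝 x] dd i W := fun i => by
        filter_upwards [e1.eventuallyEq_nhds] with y hy
        unfold dd
        rw [hy.fderiv_eq]
      have e3 : lap (fun x => E n x * W x) x = lap W x := by
        rw [lap_eq, lap_eq]
        refine Finset.sum_congr rfl fun i _ => ?_
        change fderiv ℝ (dd i (fun x => E n x * W x)) x (ee i) = fderiv ℝ (dd i W) x (ee i)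
        rw [(e2 i).fderiv_eq]
      rw [e3]
  have : ∀ n, ∫ x, E n x * W x * lap ψ x = ∫ x, ψ x * lap (fun x => E n x * W x) x := fun n =>
    ibp_cs (hEW n) hψ (hEc n).mul_right
  simp only [this] at L1
  exact tendsto_nhds_unique L1 L2

lemma pow_scale {w : R2 → ℝ} (hw : Dec w) (k : ℕ) :
    ∫ x, ((k + 1) * w x ^ k * fderiv ℝ w x x) = -2 * ∫ x, w x ^ (k + 1) := by
  have hs := (scal hw (Slow.of_bdd (q := fun _ => 1) continuous_const 1 (by simp)) k).2
  simp only [one_mul] at hs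
  have h2 : HasDerivAt (fun l : ℝ => (l ^ 2)⁻¹ * ∫ x, w x ^ (k + 1)) (-2 * ∫ x, w x ^ (k + 1)) 1 := by
    have := (((hasDerivAt_id (1:ℝ)).fun_pow 2).fun_inv (by simp)).mul_const (∫ x, w x ^ (k + 1))
    refine this.congr_deriv ?_
    norm_num
  refine hs.unique (h2.congr_of_eventuallyEq ?_)
  filter_upwards [Ioi_mem_nhds (show (0 : ℝ) < 1 by norm_num)] with l hl
  have := Measure.integral_comp_smul (volume : Measure R2) (fun x => w x ^ (k + 1)) l
  rw [this]
  simp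

lemma h_slow {h : R2 → ℝ} {p : ℝ} (hc : Continuous h) (hhom : Homog h p) : Slow h := by
  obtain ⟨C, hC⟩ := (isCompact_closedBall (0 : R2) 1).exists_bound_of_continuousOn hc.continuousOn
  have hC0 : 0 ≤ C := (norm_nonneg _).trans (hC 0 (by simp))
  obtain ⟨N, hN⟩ := exists_nat_ge p
  refine ⟨hc, C, N, hC0, fun x => ?_⟩
  have hx : 0 < 1 + ‖x‖ := by positivity
  have h1 := hhom (1 + ‖x‖) hx ((1 + ‖x‖)⁻¹ • x)
  rw [smul_smul, mul_inv_cancel₀ hx.ne', one_smul] at h1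
  have h2 : ‖h ((1 + ‖x‖)⁻¹ • x)‖ ≤ C := by
    apply hC
    rw [mem_closedBall_zero_iff, norm_smul, norm_inv, Real.norm_eq_abs, abs_of_pos hx,
      inv_mul_le_iff₀ hx]
    linarith
  rw [h1, abs_mul, abs_of_nonneg (by positivity), mul_comm C]
  have h3 : (1 + ‖x‖) ^ p ≤ (1 + ‖x‖) ^ N := by
    rw [← Real.rpow_natCast]
    exact Real.rpow_le_rpow_of_exponent_le (by linarith [norm_nonneg x]) hN
  exact mul_le_mul h3 h2 (abs_nonneg _) (by positivity)

lemma Slow.shift {h : R2 → ℝ} (hh : Slow h) (y : R2) : Slow (fun x => h (x + y)) := by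
  obtain ⟨hc, C, N, hC0, hb⟩ := hh
  refine ⟨by fun_prop, C * (1 + ‖y‖) ^ N, N, by positivity, fun x => (hb _).trans ?_⟩
  rw [mul_assoc, ← mul_pow]
  gcongr
  nlinarith [norm_add_le x y, norm_nonneg x, norm_nonneg y]

lemma h_scale {w h : R2 → ℝ} {p : ℝ} (hw : Dec w) (hh : Slow h) (hhom : Homog h p) (y0 : R2)
    (hcrit : gradient (Hfun h w) y0 = 0) :
    ∫ x, (h (x + y0) * w x) * fderiv ℝ w x x = -((2 + p) / 2) * Hfun h w y0 := by
  have hs := (scal hw (hh.shift y0) 1).2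
  have hHd : HasFDerivAt (Hfun h w) (0 : R2 →L[ℝ] ℝ) y0 := by
    have h1 := (H_diff hw hh y0).hasFDerivAt
    have h2 : fderiv ℝ (Hfun h w) y0 = 0 := by
      simpa [gradient] using hcrit
    rwa [h2] at h1
  have e1 : HasDerivAt (fun t : ℝ => (t • y0 : R2)) y0 1 := by
    simpa using ((hasDerivAt_id (1:ℝ)).smul_const y0)
  have e2 : HasDerivAt (fun t : ℝ => Hfun h w (t • y0)) 0 1 := by
    have h3 : HasFDerivAt (Hfun h w) (0 : R2 →L[ℝ] ℝ) ((1:ℝ) • y0) := by simpa using hHd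
    have h4 := h3.comp_hasDerivAt (1:ℝ) e1
    have h5 : (0 : R2 →L[ℝ] ℝ) y0 = 0 := rfl
    rw [h5] at h4
    exact h4
  have e3 : HasDerivAt (fun t : ℝ => t ^ (-(2 + p))) (-(2 + p)) 1 := by
    simpa using Real.hasDerivAt_rpow_const (x := 1) (p := -(2 + p)) (Or.inl one_ne_zero)
  have e4 := e3.fun_mul e2
  have e5 : (fun l : ℝ => ∫ x, h (x + y0) * w (l • x) ^ (1 + 1)) =ᶠ[𝓝 1]
      fun t : ℝ => t ^ (-(2 + p)) * Hfun h w (t • y0) := by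
    filter_upwards [Ioi_mem_nhds (show (0 : ℝ) < 1 by norm_num)] with l hl
    have hl' : 0 < l := hl
    have := Measure.integral_comp_smul (volume : Measure R2)
      (fun z => h (l⁻¹ • (z + l • y0)) * w z ^ (1 + 1)) l
    have e6 : ∀ x : R2, l⁻¹ • (l • x + l • y0) = x + y0 := by
      intro x
      rw [← smul_add, smul_smul, inv_mul_cancel₀ hl'.ne', one_smul]
    simp only [e6] at this
    rw [this]
    have e7 : ∀ z, h (l⁻¹ • (z + l • y0)) = l⁻¹ ^ p * h (z + l • y0) := fun z =>
      hhom _ (by positivity) _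
    simp only [e7, mul_assoc]
    rw [integral_const_mul]
    unfold Hfun
    simp only [finrank_euclideanSpace, Fintype.card_fin, smul_eq_mul]
    rw [abs_of_pos (by positivity), neg_add, Real.rpow_add hl', Real.rpow_neg hl'.le,
      Real.rpow_neg hl'.le, Real.inv_rpow hl'.le]
    have : l ^ (2:ℝ) = l ^ (2:ℕ) := by norm_cast
    rw [this, mul_assoc]
  have e8 := hs.unique (e4.congr_of_eventuallyEq e5)
  simp only [one_smul, Real.one_rpow, mul_zero, add_zero, Nat.cast_one, pow_one] at e8
  have e9 : ∫ x, h (x + y0) * ((1 + 1) * w x * fderiv ℝ w x x) =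
      2 * ∫ x, (h (x + y0) * w x) * fderiv ℝ w x x := by
    rw [← integral_const_mul]
    congr 1
    funext x
    ring
  rw [e9] at e8
  linarith

lemma H_pos {w h : R2 → ℝ} (hw : Dec w) (hwp : ∀ x, 0 < w x) (hh : Slow h) (hnn : ∀ x, 0 ≤ h x)
    (y0 : R2) (huniq : ∀ y, gradient (Hfun h w) y = 0 → y = y0) : 0 < Hfun h w y0 := by
  have hint : Integrable (fun x => h (x + y0) * w x ^ 2) := by
    simpa using hw.integrable (hh.shift y0) 1 1 (by norm_num)
  have hnonneg : ∀ x, 0 ≤ h (x + y0) * w x ^ 2 := fun x => mul_nonneg (hnn _) (sq_nonneg _)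
  refine lt_of_le_of_ne (integral_nonneg hnonneg) fun h0 => ?_
  have h1 := (integral_eq_zero_iff_of_nonneg hnonneg hint).1 h0.symm
  have hcont : Continuous (fun x => h (x + y0) * w x ^ 2) :=
    (hh.shift y0).1.mul (hw.1.continuous.pow 2)
  have h2 := (hcont.ae_eq_iff_eq volume continuous_zero).1 h1
  have h3 : ∀ x, h x = 0 := by
    intro x
    have := congrFun h2 (x - y0)
    simpa [(hwp (x - y0)).ne'] using this
  have h4 : Hfun h w = fun _ => 0 := by
    funext y
    simp [Hfun, h3]
  have h5 : ∀ y, y = y0 := fun y => huniq y (by rw [h4]; simp [gradient])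
  have h6 : ee 0 = (0 : R2) := (h5 _).trans (h5 _).symm
  have := norm_ee 0
  rw [h6] at this
  simp at this

lemma ground_dec {w : R2 → ℝ} (hw : IsGroundState w) : Dec w := by
  obtain ⟨C, hC⟩ := ground_decay hw
  refine ⟨hw.smooth.of_le (by norm_num), C, ?_, hC⟩
  have := (abs_nonneg _).trans (hC 0).1
  simpa using this

lemma Dec.int_dd {w : R2 → ℝ} (hw : Dec w) (i : Fin 2) : Integrable (dd i w) := by
  obtain ⟨h1, C, h0, h2⟩ := hw
  refine ((int_bound 0).const_mul C).mono' (dd_cont h1 i).aestronglyMeasurable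
    (Eventually.of_forall fun x => ?_)
  have := (fderiv ℝ w x).le_opNorm (ee i)
  rw [norm_ee, mul_one] at this
  refine this.trans ((h2 x).2.trans ?_)
  rw [pow_zero, one_mul]
  refine mul_le_mul_of_nonneg_left (exp_le_exp.2 ?_) h0
  linarith [norm_nonneg x]

lemma main_id {w ψ : R2 → ℝ} (hw : IsGroundState w) (hψ : ContDiff ℝ 2 ψ) (hb : BddFun ψ)
    {g : R2 → ℝ} (hg : Slow g) (a b : ℝ)
    (he : ∀ x, Lop w ψ x = a * w x ^ 3 + b * g x) :
    a * ((∫ x, w x ^ 3 * w x) + ∫ x, w x ^ 3 * fderiv ℝ w x x) +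
      b * ((∫ x, g x * w x) + ∫ x, g x * fderiv ℝ w x x) = -2 * ∫ x, ψ x * w x := by
  have hD := ground_dec hw
  have sw := hD.slow
  obtain ⟨M, hM⟩ := hb
  have sψ : Slow ψ := Slow.of_bdd hψ.continuous M hM
  have sw2 : Slow (fun x => w x * w x) := sw.mul sw
  have sw3 : Slow (fun x => w x * w x * w x) := sw2.mul sw
  have sψw : Slow (fun x => ψ x * (w x * w x)) := sψ.mul sw2
  have one : Slow (fun _ : R2 => (1:ℝ)) := Slow.of_bdd continuous_const 1 (by simp)
  have key : ∀ l : ℝ, 1 / 2 ≤ l →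
      (∫ x, ψ x * w (l • x) ^ (0 + 1)) - 3 * (∫ x, ψ x * (w x * w x) * w (l • x) ^ (0 + 1))
        - (a * (∫ x, w x * w x * w x * w (l • x) ^ (0 + 1)) + b * ∫ x, g x * w (l • x) ^ (0 + 1))
      = l ^ 2 * (∫ x, ψ x * w (l • x) ^ (0 + 1)) - l ^ 2 * ∫ x, ψ x * w (l • x) ^ (2 + 1) := by
    intro l hl
    have I1 := hD.integrable sψ 0 l hl
    have I2 := hD.integrable sψw 0 l hl
    have I3 := hD.integrable sw3 0 l hl
    have I4 := hD.integrable hg 0 l hl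
    have I5 := hD.integrable sψ 2 l hl
    have hlapψ : ∀ x, w (l • x) * lap ψ x = ψ x * w (l • x) ^ (0 + 1)
        - 3 * (ψ x * (w x * w x) * w (l • x) ^ (0 + 1))
        - (a * (w x * w x * w x * w (l • x) ^ (0 + 1)) + b * (g x * w (l • x) ^ (0 + 1))) := by
      intro x
      have := he x
      unfold Lop at this
      have h2 : lap ψ x = (1 - 3 * w x ^ 2) * ψ x - (a * w x ^ 3 + b * g x) := by linarith
      rw [h2]
      ring
    have hlapW : ∀ x, lap (fun x => w (l • x)) x = l ^ 2 * (w (l • x) - w (l • x) ^ 3) := by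
      intro x
      rw [lap_scale hw.smooth]
      have := hw.eqn (l • x)
      congr 1
      linarith
    have hψW : ∀ x, ψ x * lap (fun x => w (l • x)) x = l ^ 2 * (ψ x * w (l • x) ^ (0 + 1)) -
        l ^ 2 * (ψ x * w (l • x) ^ (2 + 1)) := by
      intro x
      rw [hlapW]; ring
    have J1 : Integrable (fun x => w (l • x)) := by simpa using hD.integrable one 0 l hl
    have J2 : Integrable (fun x => w (l • x) ^ 3) := by simpa using hD.integrable one 2 l hl
    have hI := ibp (W := fun x => w (l • x)) (ψ := ψ)
      (hw.smooth.comp (contDiff_const_smul l)) hψ M hM J1 ?_ ?_ ?_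
    · simp only [hlapψ, hψW] at hI
      have K1 : Integrable (fun x => ψ x * w (l • x) ^ (0 + 1)
        - 3 * (ψ x * (w x * w x) * w (l • x) ^ (0 + 1))) := I1.sub (I2.const_mul 3)
      have K2 : Integrable (fun x => a * (w x * w x * w x * w (l • x) ^ (0 + 1)) +
        b * (g x * w (l • x) ^ (0 + 1))) := (I3.const_mul a).add (I4.const_mul b)
      rw [integral_sub K1 K2,
        integral_sub I1 (I2.const_mul 3), integral_add (I3.const_mul a) (I4.const_mul b),
        integral_sub (I1.const_mul _) (I5.const_mul _)] at hI
      simp only [integral_const_mul] at hI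
      exact hI
    · intro i
      rw [dd_scale]
      exact ((hD.int_dd i).comp_smul (by linarith : l ≠ 0)).const_mul l
    · have : lap (fun x => w (l • x)) = fun x => l ^ 2 * (w (l • x) - w (l • x) ^ 3) := funext hlapW
      rw [this]
      exact (J1.sub J2).const_mul _
    · simp only [hlapψ]
      exact (I1.sub (I2.const_mul 3)).sub ((I3.const_mul a).add (I4.const_mul b))
  have d1 := (scal hD sψ 0).2
  have d2 := (scal hD sψw 0).2
  have d3 := (scal hD sw3 0).2
  have d4 := (scal hD hg 0).2
  have d5 := (scal hD sψ 2).2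
  have dl := (d1.fun_sub (d2.const_mul 3)).fun_sub ((d3.const_mul a).fun_add (d4.const_mul b))
  have dsq := (hasDerivAt_id (1:ℝ)).fun_pow 2
  have dr := (dsq.fun_mul d1).fun_sub (dsq.fun_mul d5)
  have hev : (fun l : ℝ => (∫ x, ψ x * w (l • x) ^ (0 + 1))
        - 3 * (∫ x, ψ x * (w x * w x) * w (l • x) ^ (0 + 1))
        - (a * (∫ x, w x * w x * w x * w (l • x) ^ (0 + 1)) + b * ∫ x, g x * w (l • x) ^ (0 + 1)))
      =ᶠ[𝓝 1] fun l : ℝ => id l ^ 2 * (∫ x, ψ x * w (l • x) ^ (0 + 1)) -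
        id l ^ 2 * ∫ x, ψ x * w (l • x) ^ (2 + 1) := by
    filter_upwards [Ioi_mem_nhds (show (1/2 : ℝ) < 1 by norm_num)] with l hl
    exact key l (le_of_lt hl)
  have hder := dl.unique (dr.congr_of_eventuallyEq hev)
  have hval := key 1 (by norm_num)
  have c3 : ∫ x, ψ x * (((2:ℕ) + 1) * w x ^ 2 * fderiv ℝ w x x) =
      3 * ∫ x, ψ x * (w x * w x) * fderiv ℝ w x x := by
    rw [← integral_const_mul]; congr 1; funext x; push_cast; ring
  have c4 : ∫ x, ψ x * (w x * w x) * w x = ∫ x, ψ x * w x ^ 3 := by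
    congr 1; funext x; ring
  have c5 : ∀ x, w x * w x * w x = w x ^ 3 := fun x => by ring
  rw [c3] at hder
  simp only [zero_add, pow_one, pow_zero, Nat.cast_zero, one_mul, one_smul, id, one_pow,
    mul_one, c5, c4, Nat.reduceAdd, Nat.cast_ofNat, Nat.reduceSub] at hder hval
  linarith

/-- Lemma 3.3, first part: `∫ wψ₁ = 0` and `∫ wψ₂ = 0`. -/
theorem orthogonality_identities
    (w h : R2 → ℝ) (p : ℝ) (y0 : R2)
    (hw : IsGroundState w) (hp : 2 ≤ p)
    (hsmooth : ContDiff ℝ 2 h)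
    (hnonneg : ∀ x, 0 ≤ h x) (hhom : Homog h p)
    (hcrit : gradient (Hfun h w) y0 = 0)
    (huniq : ∀ y, gradient (Hfun h w) y = 0 → y = y0)
    -- `ψ₁`: the unique bounded solution of `∇ψ₁(0)=0`,
    -- `Lψ₁ = -2w³/∫w⁴ - 2h(·+y₀)w/(p∫h(·+y₀)w²)`
    (ψ1 : R2 → ℝ)
    (hψ1s : ContDiff ℝ 2 ψ1) (hψ1b : BddFun ψ1) (hψ1g : gradient ψ1 0 = 0)
    (hψ1e : ∀ x, Lop w ψ1 x =
      -(2 * (w x) ^ 3 / (∫ z, (w z) ^ 4)) - 2 * h (x + y0) * w x / (p * Hfun h w y0))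
    -- `ψ₂ = -(1/2)(w + x·∇w)`
    (ψ2 : R2 → ℝ) (hψ2 : ∀ x, ψ2 x = -(1 / 2) * (w x + xgrad w x))
    (hint1 : Integrable fun x => w x * ψ1 x)
    (hint2 : Integrable fun x => w x * ψ2 x) :
    (∫ x, w x * ψ1 x) = 0 ∧ (∫ x, w x * ψ2 x) = 0 := by
  have hD := ground_dec hw
  have sh : Slow h := h_slow hsmooth.continuous hhom
  have hH := H_pos hD hw.pos sh hnonneg y0 huniq
  have hA : 0 < ∫ z, (w z) ^ 4 := by
    rw [integral_pos_iff_support_of_nonneg (fun x => by positivity) hw.quarticInt]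
    have : Function.support (fun x => w x ^ 4) = univ := by
      ext x
      simp [(hw.pos x).ne']
    rw [this]
    simp
  constructor
  · have hm := main_id hw hψ1s hψ1b ((sh.shift y0).mul hD.slow) (-(2 / ∫ z, (w z) ^ 4))
      (-(2 / (p * Hfun h w y0))) (fun x => by rw [hψ1e x]; ring)
    have h1 := pow_scale hD 3
    have h2 := h_scale hD sh hhom y0 hcrit
    have h3 : ∫ x, (((3:ℕ) + 1 : ℝ) * w x ^ 3 * fderiv ℝ w x x) =
        4 * ∫ x, w x ^ 3 * fderiv ℝ w x x := by
      rw [← integral_const_mul]; congr 1; funext x; push_cast; ring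
    rw [h3] at h1
    have h4 : ∫ x, w x ^ 3 * w x = ∫ x, w x ^ 4 := by congr 1
    have h5 : ∫ x, h (x + y0) * w x * w x = Hfun h w y0 := by
      unfold Hfun; congr 1; funext x; ring
    have h6 : ∫ x, w x ^ 3 * fderiv ℝ w x x = -(1 / 2) * ∫ x, w x ^ 4 := by
      have h7 : ∫ x, w x ^ (3 + 1) = ∫ x, w x ^ 4 := rfl
      rw [h7] at h1
      linarith
    rw [h2, h4, h5, h6] at hm
    have hp0 : 0 < p := by linarith
    have h8 : -(2 / ∫ z, (w z) ^ 4) * ((∫ x, w x ^ 4) + -(1 / 2) * ∫ x, w x ^ 4) = -1 := by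
      field_simp; norm_num
    have h9 : -(2 / (p * Hfun h w y0)) * (Hfun h w y0 + -((2 + p) / 2) * Hfun h w y0) = 1 := by
      field_simp; ring
    rw [h8, h9] at hm
    have h10 : ∫ x, w x * ψ1 x = ∫ x, ψ1 x * w x := by congr 1; funext x; ring
    rw [h10]
    linarith
  · have h1 := pow_scale hD 1
    have hx : ∀ x, xgrad w x = fderiv ℝ w x x := by
      intro x
      unfold xgrad
      rw [real_inner_comm]
      simp [gradient]
    have i1 := (scal hD (Slow.of_bdd (q := fun _ => 1) continuous_const 1 (by simp)) 1).1
    simp only [one_mul, pow_one, Nat.cast_one] at i1 h1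
    have h2 : ∀ x, w x * ψ2 x = -(1 / 2) * w x ^ 2 +
        -(1 / 4) * ((1 + 1) * w x * fderiv ℝ w x x) := by
      intro x
      rw [hψ2, hx]; ring
    simp only [h2]
    rw [integral_add (hw.sqInt.const_mul _) (i1.const_mul _), integral_const_mul,
      integral_const_mul, h1]
    have h7 : ∫ x, w x ^ (1 + 1) = ∫ x, w x ^ 2 := rfl
    rw [h7]
    ring
end
end

section
/- Let w be the unique radial positive solution of Δw − w + w³ = 0 in ℝ², let ψ₂ = −(1/2)(w + x·∇w), and let ψ₄ ∈ C²(ℝ²)∩L^∞(ℝ²) be the unique solution of ∇ψ₄(0) = 0 and (−Δ+1−3w²)ψ₄ = 3wψ₂² + ψ₂ in ℝ². Then ∫_{ℝ²}(2wψ₄ + ψ₂²) = 0. -/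
noncomputable section
open MeasureTheory Filter Real Set
open scoped RealInnerProductSpace Topology

theorem aux_mono (g g' : ℝ → ℝ) (R : ℝ) (hg : ∀ r ≥ R, HasDerivAt g (g' r) r)
    (h : ∀ r ≥ R, 0 ≤ g' r) : MonotoneOn g (Ici R) := by
  refine monotoneOn_of_deriv_nonneg (convex_Ici R)
    (fun r hr => (hg r hr).continuousAt.continuousWithinAt)
    (fun r hr => ((hg r (interior_subset hr)).differentiableAt.differentiableWithinAt)) ?_
  intro r hr
  rw [(hg r (interior_subset hr)).deriv]
  exact h r (interior_subset hr)

theorem aux_strauss (f p : ℝ → ℝ) (hf : ∀ r > 0, HasDerivAt f (p r) r)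
    (h1 : IntegrableOn (fun r => r * f r ^ 2) (Ioi 0))
    (h2 : IntegrableOn (fun r => r * p r ^ 2) (Ioi 0))
    (hfc : ContinuousOn f (Ioi 0)) (hpc : ContinuousOn p (Ioi 0)) :
    Tendsto f atTop (𝓝 0) := by
  have hd : ∀ r ∈ Ioi (1:ℝ), HasDerivAt (fun r => r * f r ^ 2) (f r ^ 2 + 2 * r * f r * p r) r := by
    intro r hr
    have := (hasDerivAt_id r).mul ((hf r (lt_trans one_pos hr)).pow 2)
    refine this.congr_deriv ?_
    simp; ring
  have hs : Ioi (1:ℝ) ⊆ Ioi 0 := Ioi_subset_Ioi zero_le_one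
  have hi : IntegrableOn (fun r => f r ^ 2 + 2 * r * f r * p r) (Ioi 1) := by
    refine Integrable.mono' (g := fun r => 2 * (r * f r ^ 2) + r * p r ^ 2)
      (((h1.mono_set hs).const_mul 2).add (h2.mono_set hs)) ?_ ?_
    · refine ContinuousOn.aestronglyMeasurable ?_ measurableSet_Ioi
      have a := hfc.mono hs
      have b := hpc.mono hs
      fun_prop
    · filter_upwards [ae_restrict_mem measurableSet_Ioi] with r hr
      have hr : 1 < r := hr
      rw [Real.norm_eq_abs, abs_le]
      constructor
      · nlinarith [mul_nonneg (by linarith : (0:ℝ) ≤ r) (sq_nonneg (f r + p r)), sq_nonneg (f r), mul_nonneg (by linarith : (0:ℝ) ≤ r) (sq_nonneg (f r))]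
      · nlinarith [mul_nonneg (by linarith : (0:ℝ) ≤ r) (sq_nonneg (f r - p r)), mul_nonneg (by linarith : (0:ℝ) ≤ r - 1) (sq_nonneg (f r))]
  have ht := tendsto_limUnder_of_hasDerivAt_of_integrableOn_Ioi hd hi
  have h3 : Tendsto (fun r => f r ^ 2) atTop (𝓝 0) := by
    have := ht.mul tendsto_inv_atTop_zero
    rw [mul_zero] at this
    refine this.congr' ?_
    filter_upwards [eventually_gt_atTop 0] with r hr
    field_simp
  have h4 := h3.sqrt
  simp only [Real.sqrt_sq_eq_abs, Real.sqrt_zero] at h4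
  exact (tendsto_zero_iff_abs_tendsto_zero f).2 h4

theorem aux_decay (f p : ℝ → ℝ) (hf : ∀ r > 0, HasDerivAt f (p r) r)
    (hp : ∀ r > 0, HasDerivAt p (-(p r) / r + f r - f r ^ 3) r)
    (hpos : ∀ r, 0 < f r) (ht : Tendsto f atTop (𝓝 0)) :
    ∃ R C : ℝ, 0 < C ∧ ∀ r ≥ R, |f r| ≤ C * exp (-(r / 2)) ∧ |p r| ≤ C * exp (-(r / 2)) := by
  have he : ∀ᶠ r in atTop, f r < 1 / 2 := ht.eventually_lt_const (by norm_num)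
  obtain ⟨R0, hR0⟩ := eventually_atTop.1 he
  set R := max R0 1 with hR
  have hR1 : 1 ≤ R := le_max_right _ _
  have hlt : ∀ r ≥ R, f r < 1 / 2 := fun r hr => hR0 r (le_trans (le_max_left _ _) hr)
  have hf3 : ∀ r ≥ R, f r / 2 ≤ f r - f r ^ 3 := fun r hr => by
    have a := hlt r hr
    have b := hpos r
    nlinarith [mul_pos b (by linarith : 0 < 1/2 - f r), mul_pos b (mul_pos b (by linarith : 0 < 1/2 - f r))]
  have m1 : MonotoneOn (fun r => r * p r) (Ici R) := by
    refine aux_mono _ (fun r => r * (f r - f r ^ 3)) R ?_ ?_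
    · intro r hr
      have hr0 : 0 < r := by linarith
      have := (hasDerivAt_id r).mul (hp r hr0)
      refine this.congr_deriv ?_
      simp; field_simp; ring
    · intro r hr
      have := hf3 r hr
      have := hpos r
      exact mul_nonneg (by linarith) (by linarith)
  have hpn : ∀ r ≥ R, p r ≤ 0 := by
    intro r hr
    by_contra hc
    push Not at hc
    have m2 : MonotoneOn f (Ici r) := by
      refine aux_mono _ p r (fun s hs => hf s (by linarith)) ?_
      intro s hs
      have hs0 : r ≤ s := hs
      have := m1 (show r ∈ Ici R from hr) (show s ∈ Ici R from hr.le.trans hs0) hs0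
      simp only at this
      have h5 : 0 < r * p r := mul_pos (by linarith) hc
      have h6 : 0 < s * p s := by linarith
      exact (pos_of_mul_pos_right h6 (by linarith)).le
    have : f r ≤ 0 := ge_of_tendsto ht (by
      filter_upwards [eventually_ge_atTop r] with s hs
      exact m2 self_mem_Ici hs hs)
    linarith [hpos r]
  have hpp : ∀ r ≥ R, f r / 2 ≤ -(p r) / r + f r - f r ^ 3 := by
    intro r hr
    have : 0 ≤ -(p r) / r := div_nonneg (by linarith [hpn r hr]) (by linarith)
    linarith [hf3 r hr]
  -- h = p + f/2
  have m3 : MonotoneOn (fun r => exp (-(r/2)) * (p r + f r / 2)) (Ici R) := by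
    refine aux_mono _ (fun r => exp (-(r/2)) * ((-(p r) / r + f r - f r ^ 3) - f r / 4)) R ?_ ?_
    · intro r hr
      have hr0 : 0 < r := by linarith
      have h1 : HasDerivAt (fun r:ℝ => exp (-(r/2))) (exp (-(r/2)) * (-(1/2))) r :=
        (((hasDerivAt_id r).div_const 2).neg).exp
      have := h1.mul ((hp r hr0).add ((hf r hr0).div_const 2))
      refine this.congr_deriv ?_
      simp only [Pi.add_apply]
      ring
    · intro r hr
      have := hpp r hr
      have := hpos r
      exact mul_nonneg (exp_pos _).le (by linarith)
  have hh : ∀ r ≥ R, p r + f r / 2 ≤ 0 := by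
    intro r hr
    by_contra hc
    push Not at hc
    have hl : Tendsto (fun s : ℝ => exp (-(s/2)) * (1 / 4)) atTop (𝓝 0) := by
      have : Tendsto (fun s : ℝ => s / 2) atTop atTop := tendsto_id.atTop_div_const (by norm_num)
      have h7 := (tendsto_exp_neg_atTop_nhds_zero.comp this).mul_const (1/4)
      rw [zero_mul] at h7
      exact h7
    have : exp (-(r/2)) * (p r + f r / 2) ≤ 0 := ge_of_tendsto hl (by
      filter_upwards [eventually_ge_atTop r] with s hs
      refine (m3 (show r ∈ Ici R from hr) (show s ∈ Ici R from hr.le.trans hs) hs).trans ?_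
      have h1 := hpn s (hr.le.trans hs)
      have h2 := hlt s (hr.le.trans hs)
      exact mul_le_mul_of_nonneg_left (by linarith) (exp_pos _).le)
    have := mul_pos (exp_pos (-(r/2))) hc
    linarith
  have m4 : MonotoneOn (fun r => -(exp (r/2) * f r)) (Ici R) := by
    refine aux_mono _ (fun r => -(exp (r/2) * (p r + f r / 2))) R ?_ ?_
    · intro r hr
      have hr0 : 0 < r := by linarith
      have h1 : HasDerivAt (fun r:ℝ => exp (r/2)) (exp (r/2) * (1/2)) r :=
        (((hasDerivAt_id r).div_const 2)).exp
      have := (h1.mul (hf r hr0)).neg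
      refine this.congr_deriv ?_
      ring
    · intro r hr
      have := hh r hr
      have := mul_nonneg (exp_pos (r/2)).le (by linarith : 0 ≤ -(p r + f r / 2))
      linarith
  set C1 := exp (R/2) * f R with hC1
  have hC1p : 0 < C1 := mul_pos (exp_pos _) (hpos R)
  have hfb : ∀ r ≥ R, f r ≤ C1 * exp (-(r/2)) := by
    intro r hr
    have := m4 (show R ∈ Ici R from le_refl R) hr hr
    simp only at this
    have h1 : exp (r/2) * f r ≤ C1 := by linarith
    rw [exp_neg, ← div_eq_mul_inv, le_div_iff₀ (exp_pos _)]
    linarith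
  have m5 : MonotoneOn p (Ici R) := by
    refine aux_mono _ _ R (fun r hr => hp r (by linarith)) ?_
    intro r hr
    linarith [hpp r hr, hpos r]
  refine ⟨R + 1, C1 * exp (1/2), by positivity, ?_⟩
  intro r hr
  have e1 : C1 * exp (1/2) * exp (-(r/2)) = C1 * exp (-((r-1)/2)) := by
    rw [mul_assoc, ← exp_add]; ring_nf
  have e2 : exp (-(r/2)) ≤ exp (-((r-1)/2)) := exp_le_exp.2 (by linarith)
  rw [e1]
  constructor
  · rw [abs_of_pos (hpos r)]
    exact (hfb r (by linarith)).trans (mul_le_mul_of_nonneg_left e2 hC1p.le)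
  · rw [abs_of_nonpos (hpn r (by linarith))]
    obtain ⟨c, hc, hc2⟩ := exists_hasDerivAt_eq_slope f p (show r - 1 < r by linarith)
      (fun s hs => (hf s (by linarith [hs.1])).continuousAt.continuousWithinAt)
      (fun s hs => hf s (by linarith [hs.1]))
    have h1 : p c ≤ p r := m5 (show c ∈ Ici R by simp; linarith [hc.1]) (show r ∈ Ici R by simp; linarith) hc.2.le
    have h2 := hfb (r-1) (by linarith)
    have h3 := hpos r
    rw [show r - (r-1) = 1 by ring, div_one] at hc2
    linarith

theorem aux_norm_curve (y v : R2) (hy : y ≠ 0) :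
    HasDerivAt (fun t : ℝ => ‖y + t • v‖) (⟪y, v⟫ / ‖y‖) 0 := by
  have h0 : HasDerivAt (fun t : ℝ => y + t • v) v 0 := by
    simpa using ((hasDerivAt_id (0:ℝ)).smul_const v).const_add y
  have h1 := h0.norm_sq.sqrt (by simpa using hy)
  have hn : ‖y‖ ≠ 0 := by simpa using hy
  have h2 : (fun t : ℝ => √(‖y + t • v‖ ^ 2)) = fun t : ℝ => ‖y + t • v‖ := by
    funext t; exact Real.sqrt_sq (norm_nonneg _)
  rw [h2] at h1
  refine h1.congr_deriv ?_
  simp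
  field_simp

theorem aux_curve (g : R2 → ℝ) (y v : R2) (hg : DifferentiableAt ℝ g y) :
    HasDerivAt (fun t : ℝ => g (y + t • v)) (fderiv ℝ g y v) 0 := by
  have h0 : HasDerivAt (fun t : ℝ => y + t • v) v 0 := by
    simpa using ((hasDerivAt_id (0:ℝ)).smul_const v).const_add y
  have h1 : HasFDerivAt g (fderiv ℝ g y) (y + (0:ℝ) • v) := by simpa using hg.hasFDerivAt
  exact h1.comp_hasDerivAt (0:ℝ) h0

theorem aux_cd1 (g : R2 → ℝ) (hg : ContDiff ℝ 2 g) (v : R2) :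
    ContDiff ℝ 1 (fun y => fderiv ℝ g y v) :=
  (hg.fderiv_right (m := 1) (by norm_num)).clm_apply contDiff_const

theorem aux_radial (w : R2 → ℝ) (hw : IsGroundState w) : ∃ f p : ℝ → ℝ,
    (∀ x, w x = f ‖x‖) ∧ (∀ x, fderiv ℝ w x x = ‖x‖ * p ‖x‖) ∧
    (∀ x v, x ≠ 0 → fderiv ℝ w x v = p ‖x‖ * (⟪x, v⟫ / ‖x‖)) ∧
    (∀ r, HasDerivAt f (p r) r) ∧ (∀ r > 0, HasDerivAt p (-(p r) / r + f r - f r ^ 3) r) ∧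
    Continuous p ∧ (∀ r, 0 < f r) := by
  set e : R2 := EuclideanSpace.single 0 1 with he
  set e2 : R2 := EuclideanSpace.single 1 1 with he2
  have hen : ‖e‖ = 1 := by simp [he]
  have hdw : Differentiable ℝ w := hw.smooth.differentiable (by norm_num)
  set f : ℝ → ℝ := fun r => w (r • e) with hf
  set p : ℝ → ℝ := fun r => fderiv ℝ w (r • e) e with hp
  have hA : ∀ x, w x = f ‖x‖ := fun x => hw.radial _ _ (by simp [norm_smul, hen])
  have hC : ∀ r, HasDerivAt f (p r) r := by
    intro r
    have h0 : HasDerivAt (fun t : ℝ => t • e) e r := by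
      simpa using ((hasDerivAt_id r).smul_const e)
    exact (hdw (r • e)).hasFDerivAt.comp_hasDerivAt r h0
  have hF : ∀ x v, x ≠ 0 → fderiv ℝ w x v = p ‖x‖ * (⟪x, v⟫ / ‖x‖) := by
    intro x v hx
    have h1 := aux_curve w x v (hdw x)
    have h2 : (fun t : ℝ => w (x + t • v)) = fun t : ℝ => f ‖x + t • v‖ := funext fun t => hA _
    rw [h2] at h1
    have h3 : HasDerivAt f (p ‖x‖) ‖x + (0:ℝ) • v‖ := by simpa using hC ‖x‖
    have h4 := h3.comp (0:ℝ) (aux_norm_curve x v hx)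
    exact h1.unique h4
  have hcd := aux_cd1 w hw.smooth
  have hpd : ∀ r, HasDerivAt p (fderiv ℝ (fun y => fderiv ℝ w y e) (r • e) e) r := by
    intro r
    have h0 : HasDerivAt (fun t : ℝ => t • e) e r := by
      simpa using ((hasDerivAt_id r).smul_const e)
    exact (((hcd e).differentiable (by norm_num)) (r • e)).hasFDerivAt.comp_hasDerivAt r h0
  refine ⟨f, p, hA, ?_, hF, hC, ?_, ?_, fun r => hw.pos _⟩
  · intro x
    by_cases hx : x = 0
    · simp [hx]
    · rw [hF x x hx, real_inner_self_eq_norm_sq]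
      have hn : ‖x‖ ≠ 0 := by simpa using hx
      field_simp
  · intro r hr
    refine (hpd r).congr_deriv ?_
    have hx : r • e ≠ 0 := smul_ne_zero hr.ne' (by rw [← norm_ne_zero_iff, hen]; norm_num)
    have hxn : ‖r • e‖ = r := by simp [norm_smul, hen, abs_of_pos hr]
    have hin : ⟪r • e, e2⟫ = 0 := by
      simp [he, he2, inner_smul_left, EuclideanSpace.inner_single_left]
    have h1 := aux_curve (fun y => fderiv ℝ w y e2) (r • e) e2
      ((hcd e2).differentiable (by norm_num) (r • e))
    have hN := aux_norm_curve (r • e) e2 hx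
    rw [hin, zero_div] at hN
    have hp0 : HasDerivAt p (fderiv ℝ (fun y => fderiv ℝ w y e) (r • e) e) ‖r • e + (0:ℝ) • e2‖ := by
      simpa [hxn] using hpd r
    have h2 := (hp0.comp (0:ℝ) hN).mul ((hasDerivAt_id (0:ℝ)).div hN (by simpa using hx))
    have h3 : (fun t : ℝ => fderiv ℝ w (r • e + t • e2) e2) =ᶠ[𝓝 0]
        (p ∘ fun t : ℝ => ‖r • e + t • e2‖) * (id / fun t : ℝ => ‖r • e + t • e2‖) := by
      have hc : ContinuousAt (fun t : ℝ => ‖r • e + t • e2‖) 0 := by fun_prop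
      have : ∀ᶠ t in 𝓝 (0:ℝ), 0 < ‖r • e + t • e2‖ :=
        hc.eventually (lt_mem_nhds (by simpa [hxn] using hr))
      filter_upwards [this] with t ht
      rw [hF _ e2 (norm_pos_iff.1 ht)]
      have : ⟪r • e + t • e2, e2⟫ = t := by
        rw [inner_add_left, hin, inner_smul_left, real_inner_self_eq_norm_sq]; simp [he2]
      simp [this]
    have h4 := h1.unique (h2.congr_of_eventuallyEq h3)
    have h5 := hw.eqn (r • e)
    unfold lap at h5
    rw [Fin.sum_univ_two, ← he, ← he2, h4] at h5
    simp [hxn] at h5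
    have h6 : p r * (r / r ^ 2) = p r / r := by field_simp
    rw [h6] at h5
    have : f r = w (r • e) := rfl
    rw [this]
    rw [neg_div]
    linarith
  · exact continuous_iff_continuousAt.2 fun r => (hpd r).continuousAt

theorem aux_bound1 (g : ℝ → ℝ) (hg : Continuous g) (R C : ℝ) (hC : 0 < C)
    (h : ∀ r ≥ R, |g r| ≤ C * exp (-(r / 2))) :
    ∃ K : ℝ, 0 < K ∧ ∀ r ≥ 0, |g r| ≤ K * ((1 + r) ^ 4)⁻¹ := by
  obtain ⟨K, hK⟩ := (isCompact_Icc (a := (0:ℝ)) (b := R)).exists_bound_of_continuousOn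
    (f := fun r => g r * (1 + r) ^ 4) (by fun_prop)
  refine ⟨max K (C * (384 * exp (1/2))), lt_max_of_lt_right (by positivity), ?_⟩
  intro r hr
  rw [← div_eq_mul_inv, le_div_iff₀ (by positivity)]
  rcases le_total r R with h1 | h1
  · refine le_trans ?_ (le_max_left _ _)
    have := hK r ⟨hr, h1⟩
    rwa [norm_mul, norm_eq_abs, norm_of_nonneg (by positivity)] at this
  · refine le_trans ?_ (le_max_right _ _)
    have h2 := h r h1
    have h3 := Real.pow_div_factorial_le_exp (x := (1 + r)/2) (by positivity) 4
    have h4 : (1 + r)^4 ≤ 384 * exp ((1+r)/2) := by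
      have : (Nat.factorial 4 : ℝ) = 24 := by norm_num [Nat.factorial]
      rw [this] at h3
      have : ((1+r)/2)^4/24 = (1+r)^4/384 := by ring
      rw [this, div_le_iff₀ (by norm_num)] at h3
      linarith
    calc |g r| * (1+r)^4 ≤ (C * exp (-(r/2))) * (384 * exp ((1+r)/2)) := by gcongr
      _ = C * (384 * (exp (-(r/2)) * exp ((1+r)/2))) := by ring
      _ = _ := by rw [← exp_add]; ring_nf

theorem aux_finrank : Module.finrank ℝ R2 = 2 := by simp

theorem aux_bounds (w : R2 → ℝ) (hw : IsGroundState w) (f p : ℝ → ℝ)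
    (hA : ∀ x, w x = f ‖x‖)
    (hF : ∀ x v, x ≠ 0 → fderiv ℝ w x v = p ‖x‖ * (⟪x, v⟫ / ‖x‖))
    (hC : ∀ r, HasDerivAt f (p r) r) (hD : ∀ r > 0, HasDerivAt p (-(p r) / r + f r - f r ^ 3) r)
    (hpc : Continuous p) (hpos : ∀ r, 0 < f r) :
    ∃ K : ℝ, 0 < K ∧ (∀ r ≥ 0, |f r| ≤ K * ((1 + r) ^ 4)⁻¹) ∧
      (∀ r ≥ 0, |p r| ≤ K * ((1 + r) ^ 4)⁻¹) ∧
      (∀ x, |w x| ≤ K * ((1 + ‖x‖) ^ 4)⁻¹) ∧ (∀ x, ‖fderiv ℝ w x‖ ≤ K * ((1 + ‖x‖) ^ 4)⁻¹) := by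
  have hfc : Continuous f := continuous_iff_continuousAt.2 fun r => (hC r).continuousAt
  have i1 : IntegrableOn (fun r => r * f r ^ 2) (Ioi 0) := by
    have h := hw.sqInt
    simp_rw [hA] at h
    have := (integrable_fun_norm_addHaar (volume : Measure R2) (f := fun r => f r ^ 2)).1 h
    simpa using this
  have i2 : IntegrableOn (fun r => r * p r ^ 2) (Ioi 0) := by
    have h : Integrable (fun x : R2 => p ‖x‖ ^ 2) := by
      refine hw.gradSqInt.mono' ?_ ?_
      · exact Continuous.aestronglyMeasurable (by fun_prop)
      · have : ∀ᵐ x : R2, x ≠ 0 := by simp [ae_iff]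
        filter_upwards [this] with x hx
        rw [norm_of_nonneg (sq_nonneg _)]
        have hn : 0 < ‖x‖ := norm_pos_iff.2 hx
        have h1 := hF x x hx
        rw [real_inner_self_eq_norm_sq] at h1
        have h2 : fderiv ℝ w x x = p ‖x‖ * ‖x‖ := by rw [h1]; field_simp
        have h3 := (fderiv ℝ w x).le_opNorm x
        rw [h2, norm_mul, norm_norm] at h3
        have h4 := le_of_mul_le_mul_right h3 hn
        have h5 : ‖gradient w x‖ = ‖fderiv ℝ w x‖ := by simp [gradient]
        rw [h5, ← sq_abs (p ‖x‖)]
        exact pow_le_pow_left₀ (abs_nonneg _) h4 2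
    have := (integrable_fun_norm_addHaar (volume : Measure R2) (f := fun r => p r ^ 2)).1 h
    simpa using this
  have ht := aux_strauss f p (fun r _ => hC r) i1 i2 hfc.continuousOn hpc.continuousOn
  obtain ⟨R, C, hC0, hb⟩ := aux_decay f p (fun r _ => hC r) hD hpos ht
  obtain ⟨K1, hK1, hb1⟩ := aux_bound1 f hfc R C hC0 (fun r hr => (hb r hr).1)
  obtain ⟨K2, hK2, hb2⟩ := aux_bound1 p hpc R C hC0 (fun r hr => (hb r hr).2)
  have hf' : ∀ r ≥ 0, |f r| ≤ (K1 + K2) * ((1 + r) ^ 4)⁻¹ := fun r hr => by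
    refine (hb1 r hr).trans ?_
    gcongr; linarith
  have hp' : ∀ r ≥ 0, |p r| ≤ (K1 + K2) * ((1 + r) ^ 4)⁻¹ := fun r hr => by
    refine (hb2 r hr).trans ?_
    gcongr; linarith
  refine ⟨K1 + K2, by linarith, hf', hp', fun x => ?_, ?_⟩
  · rw [hA]; exact hf' _ (norm_nonneg _)
  · have hcl : IsClosed {x : R2 | ‖fderiv ℝ w x‖ ≤ (K1 + K2) * ((1 + ‖x‖) ^ 4)⁻¹} := by
      refine isClosed_le ?_ ?_
      · exact (hw.smooth.continuous_fderiv (by norm_num)).norm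
      · refine continuous_const.mul (Continuous.inv₀ (by fun_prop) ?_)
        intro x; positivity
    have hsub : ({0}ᶜ : Set R2) ⊆ {x : R2 | ‖fderiv ℝ w x‖ ≤ (K1 + K2) * ((1 + ‖x‖) ^ 4)⁻¹} := by
      intro x hx
      have hx : x ≠ 0 := hx
      refine ContinuousLinearMap.opNorm_le_bound _ (by positivity) ?_
      intro v
      rw [hF x v hx, norm_mul]
      refine mul_le_mul (hp' _ (norm_nonneg _)) ?_ (norm_nonneg _) (by positivity)
      rw [norm_div, norm_norm, div_le_iff₀ (norm_pos_iff.2 hx)]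
      have := norm_inner_le_norm (𝕜 := ℝ) x v
      linarith
    have hd : Dense ({0}ᶜ : Set R2) := dense_compl_singleton 0
    intro x
    have : closure ({0}ᶜ : Set R2) ⊆ _ := closure_minimal hsub hcl
    rw [hd.closure_eq] at this
    exact this (mem_univ x)

theorem aux_fd_smul (g : R2 → ℝ) (c : ℝ) (x v : R2) :
    fderiv ℝ (fun y => g (c • y)) x v = c * fderiv ℝ g (c • x) v := by
  have := fderiv_comp_smul (𝕜 := ℝ) (f := g) (x := x) c
  rw [this]; simp

theorem aux_lap_smul (g : R2 → ℝ) (hg : ContDiff ℝ 2 g) (c : ℝ) (x : R2) :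
    lap (fun y => g (c • y)) x = c ^ 2 * lap g (c • x) := by
  unfold lap
  rw [Finset.mul_sum]
  refine Finset.sum_congr rfl fun i _ => ?_
  have h1 : (fun y => fderiv ℝ (fun y => g (c • y)) y (EuclideanSpace.single i 1)) =
      fun y => c * (fun z => fderiv ℝ g z (EuclideanSpace.single i 1)) (c • y) := by
    funext y; rw [aux_fd_smul]
  rw [h1, fderiv_const_mul, _root_.smul_apply,
    aux_fd_smul (fun z => fderiv ℝ g z (EuclideanSpace.single i 1)) c x]
  · simp only [smul_eq_mul]; ring
  · have := (aux_cd1 g hg (EuclideanSpace.single i 1)).differentiable (by norm_num)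
    exact (this (c • x)).comp x (by fun_prop)

theorem aux_lap_const_mul (g : R2 → ℝ) (hg : ContDiff ℝ 2 g) (c : ℝ) (x : R2) :
    lap (fun y => c * g y) x = c * lap g x := by
  unfold lap
  rw [Finset.mul_sum]
  refine Finset.sum_congr rfl fun i _ => ?_
  have h1 : (fun y => fderiv ℝ (fun y => c * g y) y (EuclideanSpace.single i 1)) =
      fun y => c * (fun z => fderiv ℝ g z (EuclideanSpace.single i 1)) y := by
    funext y
    rw [fderiv_const_mul (hg.differentiable (by norm_num) y)]
    rfl
  rw [h1, fderiv_const_mul]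
  · rfl
  · exact (aux_cd1 g hg (EuclideanSpace.single i 1)).differentiable (by norm_num) x

theorem aux_lap_mul (g h : R2 → ℝ) (hg : ContDiff ℝ 2 g) (hh : ContDiff ℝ 2 h) (x : R2) :
    lap (fun y => g y * h y) x = g x * lap h x + h x * lap g x +
      2 * ∑ i : Fin 2, fderiv ℝ g x (EuclideanSpace.single i 1) *
        fderiv ℝ h x (EuclideanSpace.single i 1) := by
  unfold lap
  rw [Finset.mul_sum, Finset.mul_sum, Finset.mul_sum, ← Finset.sum_add_distrib,
    ← Finset.sum_add_distrib]
  refine Finset.sum_congr rfl fun i _ => ?_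
  set e : R2 := EuclideanSpace.single i 1
  have dg := hg.differentiable (by norm_num)
  have dh := hh.differentiable (by norm_num)
  have dg1 := (aux_cd1 g hg e).differentiable (by norm_num)
  have dh1 := (aux_cd1 h hh e).differentiable (by norm_num)
  have h1 : (fun y => fderiv ℝ (fun y => g y * h y) y e) =
      fun y => g y * fderiv ℝ h y e + h y * fderiv ℝ g y e := by
    funext y
    rw [fderiv_fun_mul (dg y) (dh y)]
    rfl
  rw [h1, fderiv_fun_add ((dg x).fun_mul (dh1 x)) ((dh x).fun_mul (dg1 x)),
    fderiv_fun_mul (dg x) (dh1 x), fderiv_fun_mul (dh x) (dg1 x)]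
  simp only [_root_.add_apply, _root_.smul_apply, smul_eq_mul]
  ring

theorem aux_lap_cont (g : R2 → ℝ) (hg : ContDiff ℝ 2 g) : Continuous (lap g) := by
  unfold lap
  refine continuous_finsetSum _ fun i _ => ?_
  exact ((aux_cd1 g hg _).continuous_fderiv (by norm_num)).clm_apply continuous_const

theorem aux_green_c (v φ : R2 → ℝ) (hv : ContDiff ℝ 2 v) (hc : HasCompactSupport v)
    (hφ : ContDiff ℝ 2 φ) : ∫ x, v x * lap φ x = ∫ x, lap v x * φ x := by
  unfold lap
  simp_rw [Finset.mul_sum, Finset.sum_mul]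
  have key : ∀ e : R2, Continuous (fun x => fderiv ℝ v x e) ∧ HasCompactSupport (fun x => fderiv ℝ v x e) ∧
    Continuous (fun x => fderiv ℝ (fun y => fderiv ℝ v y e) x e) ∧
    HasCompactSupport (fun x => fderiv ℝ (fun y => fderiv ℝ v y e) x e) ∧
    Continuous (fun x => fderiv ℝ φ x e) ∧ Continuous (fun x => fderiv ℝ (fun y => fderiv ℝ φ y e) x e) := by
    intro e
    have c1 := hc.fderiv_apply (𝕜 := ℝ) e
    exact ⟨(aux_cd1 v hv e).continuous, c1,
      ((aux_cd1 v hv e).continuous_fderiv (by norm_num)).clm_apply continuous_const,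
      c1.fderiv_apply (𝕜 := ℝ) e, (aux_cd1 φ hφ e).continuous,
      ((aux_cd1 φ hφ e).continuous_fderiv (by norm_num)).clm_apply continuous_const⟩
  have i1 : ∀ e : R2, Integrable (fun x => v x * fderiv ℝ (fun y => fderiv ℝ φ y e) x e) := fun e =>
    (hv.continuous.mul (key e).2.2.2.2.2).integrable_of_hasCompactSupport hc.mul_right
  have i2 : ∀ e : R2, Integrable (fun x => fderiv ℝ v x e * fderiv ℝ φ x e) := fun e =>
    ((key e).1.mul (key e).2.2.2.2.1).integrable_of_hasCompactSupport (key e).2.1.mul_right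
  have i3 : ∀ e : R2, Integrable (fun x => fderiv ℝ (fun y => fderiv ℝ v y e) x e * φ x) := fun e =>
    ((key e).2.2.1.mul hφ.continuous).integrable_of_hasCompactSupport (key e).2.2.2.1.mul_right
  have i4 : ∀ e : R2, Integrable (fun x => v x * fderiv ℝ φ x e) := fun e =>
    (hv.continuous.mul (key e).2.2.2.2.1).integrable_of_hasCompactSupport hc.mul_right
  have i5 : ∀ e : R2, Integrable (fun x => fderiv ℝ v x e * φ x) := fun e =>
    ((key e).1.mul hφ.continuous).integrable_of_hasCompactSupport (key e).2.1.mul_right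
  rw [integral_finsetSum _ fun i _ => i1 _, integral_finsetSum _ fun i _ => i3 _]
  refine Finset.sum_congr rfl fun i _ => ?_
  set e : R2 := EuclideanSpace.single i 1
  have a := integral_mul_fderiv_eq_neg_fderiv_mul_of_integrable (μ := (volume : Measure R2)) (f := v)
    (g := fun y => fderiv ℝ φ y e) (v := e) (i2 e) (i1 e) (i4 e)
    (fun x _ => hv.differentiable (by norm_num) x)
    (fun x _ => (aux_cd1 φ hφ e).differentiable (by norm_num) x)
  have b := integral_mul_fderiv_eq_neg_fderiv_mul_of_integrable (μ := (volume : Measure R2))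
    (f := fun y => fderiv ℝ v y e) (g := φ) (v := e) (i3 e) (i2 e) (i5 e)
    (fun x _ => (aux_cd1 v hv e).differentiable (by norm_num) x)
    (fun x _ => hφ.differentiable (by norm_num) x)
  rw [a, b, neg_neg]

theorem aux_green (u φ : R2 → ℝ) (hu : ContDiff ℝ 2 u) (hφ : ContDiff ℝ 2 φ) (M : ℝ)
    (hM : ∀ x, |φ x| ≤ M) (h0 : Integrable u) (h1 : Integrable (fun x => fderiv ℝ u x))
    (h2 : Integrable (lap u)) (h3 : Integrable (fun x => u x * lap φ x)) :
    ∫ x, u x * lap φ x = ∫ x, lap u x * φ x := by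
  let η : ContDiffBump (0 : R2) := ⟨1, 2, one_pos, one_lt_two⟩
  have hη : ContDiff ℝ 2 (η : R2 → ℝ) := η.contDiff
  have hηc : HasCompactSupport (η : R2 → ℝ) := η.hasCompactSupport
  have hM0 : 0 ≤ M := (abs_nonneg _).trans (hM 0)
  obtain ⟨B1, hB1⟩ := (hη.continuous_fderiv (by norm_num)).bounded_above_of_compact_support (hηc.fderiv (𝕜 := ℝ))
  have hlc : HasCompactSupport (lap η) := by
    unfold lap
    simp only [Fin.sum_univ_two]
    have := fun e : R2 => (hηc.fderiv_apply (𝕜 := ℝ) e).fderiv_apply (𝕜 := ℝ) e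
    exact (this _).add (this _)
  obtain ⟨B2, hB2⟩ := (aux_lap_cont _ hη).bounded_above_of_compact_support hlc
  have hB10 : 0 ≤ B1 := (norm_nonneg _).trans (hB1 0)
  have hB20 : 0 ≤ B2 := (norm_nonneg _).trans (hB2 0)
  set ε : ℕ → ℝ := fun n => 1 / ((n : ℝ) + 1) with hε
  have hε0 : Tendsto ε atTop (𝓝 0) := tendsto_one_div_add_atTop_nhds_zero_nat
  have hεp : ∀ n, 0 < ε n := fun n => by positivity
  have hε1 : ∀ n, ε n ≤ 1 := fun n => by
    simp only [hε]; rw [div_le_one (by positivity)]; linarith [(Nat.cast_nonneg n : (0:ℝ) ≤ n)]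
  have hηn : ∀ n, ContDiff ℝ 2 (fun x : R2 => η (ε n • x)) := fun n =>
    hη.comp (contDiff_const_smul (ε n))
  have hηnc : ∀ n, HasCompactSupport (fun x : R2 => η (ε n • x)) := fun n =>
    hηc.comp_smul (hεp n).ne'
  have hg : ∀ n, ∫ x, (η (ε n • x) * u x) * lap φ x = ∫ x, lap (fun y => η (ε n • y) * u y) x * φ x :=
    fun n => aux_green_c _ φ ((hηn n).mul hu) (hηnc n).mul_right hφ
  have hpt : ∀ x : R2, Tendsto (fun n => η (ε n • x)) atTop (𝓝 1) := by
    intro x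
    have a : Tendsto (fun n => ε n • x) atTop (𝓝 0) := by simpa using hε0.smul_const x
    have b := (hη.continuous.tendsto 0).comp a
    rwa [η.one_of_mem_closedBall (by simp [η])] at b
  have t1 : Tendsto (fun n => ∫ x, (η (ε n • x) * u x) * lap φ x) atTop (𝓝 (∫ x, u x * lap φ x)) := by
    refine tendsto_integral_of_dominated_convergence (fun x => ‖u x * lap φ x‖) ?_ h3.norm ?_ ?_
    · intro n
      exact (((hηn n).continuous.mul hu.continuous).mul (aux_lap_cont φ hφ)).aestronglyMeasurable
    · intro n
      refine Eventually.of_forall fun x => ?_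
      rw [mul_assoc, norm_mul]
      have : ‖η (ε n • x)‖ ≤ 1 := by
        rw [norm_of_nonneg η.nonneg]; exact η.le_one
      exact mul_le_of_le_one_left (norm_nonneg _) this
    · refine Eventually.of_forall fun x => ?_
      simpa using ((hpt x).mul_const (u x)).mul_const (lap φ x)
  have hform : ∀ n x, lap (fun y => η (ε n • y) * u y) x = η (ε n • x) * lap u x +
      u x * (ε n ^ 2 * lap η (ε n • x)) + 2 * ∑ i : Fin 2,
        (ε n * fderiv ℝ η (ε n • x) (EuclideanSpace.single i 1)) *
        fderiv ℝ u x (EuclideanSpace.single i 1) := by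
    intro n x
    rw [aux_lap_mul _ _ (hηn n) hu, aux_lap_smul _ hη]
    simp_rw [aux_fd_smul]
  have hap : ∀ (T : R2 →L[ℝ] ℝ) (i : Fin 2), |T (EuclideanSpace.single i 1)| ≤ ‖T‖ := fun T i => by
    have := T.le_opNorm (EuclideanSpace.single i 1)
    simpa using this
  have t2 : Tendsto (fun n => ∫ x, lap (fun y => η (ε n • y) * u y) x * φ x) atTop
      (𝓝 (∫ x, lap u x * φ x)) := by
    refine tendsto_integral_of_dominated_convergence
      (fun x => (‖lap u x‖ + ‖u x‖ * B2 + 4 * B1 * ‖fderiv ℝ u x‖) * M) ?_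
      (((h2.norm.add (h0.norm.mul_const B2)).add (h1.norm.const_mul (4 * B1))).mul_const M) ?_ ?_
    · intro n
      exact ((aux_lap_cont _ ((hηn n).mul hu)).mul hφ.continuous).aestronglyMeasurable
    · intro n
      refine Eventually.of_forall fun x => ?_
      rw [norm_mul]
      refine mul_le_mul ?_ (hM x) (norm_nonneg _) (by positivity)
      rw [hform]
      have a1 : ‖η (ε n • x) * lap u x‖ ≤ ‖lap u x‖ := by
        rw [norm_mul]
        refine mul_le_of_le_one_left (norm_nonneg _) ?_
        rw [norm_of_nonneg η.nonneg]; exact η.le_one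
      have a2 : ‖u x * (ε n ^ 2 * lap η (ε n • x))‖ ≤ ‖u x‖ * B2 := by
        rw [norm_mul, norm_mul]
        refine mul_le_mul_of_nonneg_left ?_ (norm_nonneg _)
        have : ‖ε n ^ 2‖ ≤ 1 := by
          rw [norm_of_nonneg (by positivity)]; exact pow_le_one₀ (hεp n).le (hε1 n)
        exact (mul_le_of_le_one_left (norm_nonneg _) this).trans (hB2 _)
      have a3 : ∀ i : Fin 2, ‖(ε n * fderiv ℝ η (ε n • x) (EuclideanSpace.single i 1)) *
        fderiv ℝ u x (EuclideanSpace.single i 1)‖ ≤ B1 * ‖fderiv ℝ u x‖ := by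
        intro i
        rw [norm_mul, norm_mul]
        refine mul_le_mul ?_ (hap _ _) (norm_nonneg _) hB10
        have : ‖ε n‖ ≤ 1 := by
          rw [norm_of_nonneg (hεp n).le]; exact hε1 n
        exact (mul_le_of_le_one_left (norm_nonneg _) this).trans ((hap _ _).trans (hB1 _))
      rw [Fin.sum_univ_two]
      refine (norm_add₃_le).trans ?_
      have a4 := norm_add_le_of_le (a3 0) (a3 1)
      rw [norm_mul 2, Real.norm_ofNat]
      linarith
    · refine Eventually.of_forall fun x => ?_
      refine Tendsto.mul_const _ ?_
      simp_rw [hform, Fin.sum_univ_two]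
      have b1 : Tendsto (fun n => lap η (ε n • x)) atTop (𝓝 (lap η 0)) := by
        have a : Tendsto (fun n => ε n • x) atTop (𝓝 0) := by simpa using hε0.smul_const x
        exact ((aux_lap_cont _ hη).tendsto 0).comp a
      have b2 : ∀ e : R2, Tendsto (fun n => fderiv ℝ η (ε n • x) e) atTop (𝓝 (fderiv ℝ η 0 e)) := by
        intro e
        have a : Tendsto (fun n => ε n • x) atTop (𝓝 0) := by simpa using hε0.smul_const x
        exact (((aux_cd1 _ hη e).continuous).tendsto 0).comp a
      have b3 := (((hpt x).mul_const (lap u x)).add (((hε0.pow 2).mul b1).const_mul (u x))).add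
        ((((hε0.mul (b2 (EuclideanSpace.single 0 1))).mul_const
          (fderiv ℝ u x (EuclideanSpace.single 0 1))).add
          ((hε0.mul (b2 (EuclideanSpace.single 1 1))).mul_const
          (fderiv ℝ u x (EuclideanSpace.single 1 1)))).const_mul 2)
      simpa using b3
  simp_rw [hg] at t1
  exact tendsto_nhds_unique t1 t2

theorem aux_1d (f p : ℝ → ℝ) (K : ℝ) (hC : ∀ r, HasDerivAt f (p r) r)
    (hD : ∀ r > 0, HasDerivAt p (-(p r) / r + f r - f r ^ 3) r) (hpc : Continuous p)
    (hf : ∀ r ≥ 0, |f r| ≤ K * ((1 + r) ^ 4)⁻¹) (hp : ∀ r ≥ 0, |p r| ≤ K * ((1 + r) ^ 4)⁻¹)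
    (hi : IntegrableOn (fun r => r * (6 * f r * (-(1/2) * (f r + r * p r)) ^ 3 +
      3 * (-(1/2) * (f r + r * p r)) ^ 2)) (Ioi 0)) :
    ∫ r in Ioi (0:ℝ), r * (6 * f r * (-(1/2) * (f r + r * p r)) ^ 3 +
      3 * (-(1/2) * (f r + r * p r)) ^ 2) = 0 := by
  have hfc : Continuous f := continuous_iff_continuousAt.2 fun r => (hC r).continuousAt
  have lim : ∀ g : ℝ → ℝ, (∀ r ≥ 0, |g r| ≤ K * ((1 + r) ^ 4)⁻¹) → ∀ k ≤ 3,
      Tendsto (fun r => r ^ k * g r) atTop (𝓝 0) := by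
    intro g hg k hk
    have h1 : Tendsto (fun r : ℝ => K * r⁻¹) atTop (𝓝 0) := by
      simpa using tendsto_inv_atTop_zero.const_mul K
    refine squeeze_zero_norm' ?_ h1
    filter_upwards [eventually_ge_atTop 1] with r hr
    have hr0 : 0 < r := by linarith
    have h2 := hg r hr0.le
    have hK : 0 ≤ K := by
      by_contra hc
      push Not at hc
      have : K * ((1 + r) ^ 4)⁻¹ < 0 := mul_neg_of_neg_of_pos hc (by positivity)
      linarith [abs_nonneg (g r)]
    rw [norm_mul, norm_of_nonneg (by positivity : 0 ≤ r ^ k), norm_eq_abs]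
    calc r ^ k * |g r| ≤ r ^ 3 * (K * ((r) ^ 4)⁻¹) := by
          refine mul_le_mul (pow_le_pow_right₀ hr hk) (h2.trans ?_) (abs_nonneg _) (by positivity)
          gcongr; linarith
      _ = K * r⁻¹ := by field_simp
  have A0 := lim f hf 0 (by norm_num)
  have A1 := lim f hf 1 (by norm_num)
  have A2 := lim f hf 2 (by norm_num)
  have B1 := lim p hp 1 (by norm_num)
  have B2 := lim p hp 2 (by norm_num)
  have B3 := lim p hp 3 (by norm_num)
  simp only [pow_zero, one_mul, pow_one] at A0 A1 B1
  set G : ℝ → ℝ := fun r =>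
    2 * ((r ^ 2 * (f r - f r ^ 3) - f r) / 8 * (-(r * p r + r ^ 2 * (f r - f r ^ 3)) / 2)
      - (-(1/2) * (f r + r * p r)) *
        ((2 * r ^ 2 * (f r - f r ^ 3) + r ^ 3 * (1 - 3 * f r ^ 2) * p r - r * p r) / 8))
      + r ^ 2 * f r * (f r + r * p r) / 4 - r ^ 2 * f r ^ 2 / 4 with hG
  have hGt : Tendsto G atTop (𝓝 0) := by
    have a4 := ((A2.sub (A2.mul (A0.pow 2))).sub A0).div_const 8
    have rP := ((B1.add A2).sub (A2.mul (A0.pow 2))).neg.div_const 2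
    have PP := (A0.add B1).const_mul (-(1/2))
    have ra := (((A2.sub (A2.mul (A0.pow 2))).const_mul 2).add
      (B3.mul (((A0.pow 2).const_mul 3).const_sub 1))|>.sub B1).div_const 8
    have tot := ((((a4.mul rP).sub (PP.mul ra)).const_mul 2).add
      ((A1.mul (A1.add B2)).div_const 4)).sub ((A1.mul A1).div_const 4)
    simp only [mul_zero, zero_mul, add_zero, sub_zero, zero_div, neg_zero, ne_eq,
      OfNat.ofNat_ne_zero, not_false_eq_true, zero_pow] at tot
    refine tot.congr fun r => ?_
    simp only [hG]
    ring
  have hGd : ∀ r ∈ Ioi (0:ℝ), HasDerivAt G (r * (6 * f r * (-(1/2) * (f r + r * p r)) ^ 3 +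
      3 * (-(1/2) * (f r + r * p r)) ^ 2)) r := by
    intro r hr
    have hr0 : 0 < r := hr
    have F := hC r
    have Q := hD r hr0
    have X := hasDerivAt_id' r
    have S := F.fun_sub (F.fun_pow 3)
    have a4 := (((X.fun_pow 2).fun_mul S).fun_sub F).div_const 8
    have rP := (((X.fun_mul Q).fun_add ((X.fun_pow 2).fun_mul S)).fun_neg).div_const 2
    have PP := (F.fun_add (X.fun_mul Q)).const_mul (-(1/2))
    have ra := (((((X.fun_pow 2).const_mul 2).fun_mul S).fun_add
      (((X.fun_pow 3).fun_mul (((F.fun_pow 2).const_mul 3).const_sub 1)).fun_mul Q)).fun_sub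
        (X.fun_mul Q)).div_const 8
    have tot := ((((a4.fun_mul rP).fun_sub (PP.fun_mul ra)).const_mul 2).fun_add
      ((((X.fun_pow 2).fun_mul F).fun_mul (F.fun_add (X.fun_mul Q))).div_const 4)).fun_sub
        (((X.fun_pow 2).fun_mul (F.fun_pow 2)).div_const 4)
    refine tot.congr_deriv ?_
    simp only [Nat.cast_ofNat, Nat.reduceSub, pow_one, mul_one]
    field_simp
    ring
  have hGc : Continuous G := by simp only [hG]; fun_prop
  have := integral_Ioi_of_hasDerivAt_of_tendsto hGc.continuousWithinAt hGd hi hGt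
  rw [this]
  simp [hG]

theorem aux_int (k : ℕ) (hk : 3 ≤ k) : Integrable (fun x : R2 => ((1 + ‖x‖) ^ k)⁻¹) := by
  have h := integrable_one_add_norm (E := R2) (μ := volume) (r := (k : ℝ)) (by
    rw [aux_finrank]
    have : (3:ℝ) ≤ k := by exact_mod_cast hk
    push_cast; linarith)
  refine h.congr (Eventually.of_forall fun x => ?_)
  simp only
  rw [Real.rpow_neg (by positivity), Real.rpow_natCast]

theorem aux_int_of (g : R2 → ℝ) (hg : Continuous g) (C : ℝ)
    (h : ∀ x, |g x| ≤ C * ((1 + ‖x‖) ^ 3)⁻¹) : Integrable g :=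
  ((aux_int 3 le_rfl).const_mul C).mono' hg.aestronglyMeasurable (Eventually.of_forall h)

theorem aux_scale (K l : ℝ) (hK : 0 < K) (hl : 1 / 2 < l) (r : ℝ) (hr : 0 ≤ r) :
    K * ((1 + l * r) ^ 4)⁻¹ ≤ 16 * K * ((1 + r) ^ 4)⁻¹ := by
  have h1 : (1 + r) / 2 ≤ 1 + l * r := by nlinarith
  have h2 : ((1 + r) / 2) ^ 4 ≤ (1 + l * r) ^ 4 := pow_le_pow_left₀ (by positivity) h1 4
  have h3 : ((1 + l * r) ^ 4)⁻¹ ≤ (((1 + r) / 2) ^ 4)⁻¹ := inv_anti₀ (by positivity) h2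
  calc K * ((1 + l * r) ^ 4)⁻¹ ≤ K * (((1 + r) / 2) ^ 4)⁻¹ := by gcongr
    _ = _ := by field_simp; norm_num

theorem aux_b43 (r : ℝ) (hr : 0 ≤ r) : ((1 + r) ^ 4)⁻¹ ≤ ((1 + r) ^ 3)⁻¹ ∧
    ((1 + r) ^ 4)⁻¹ * r ≤ ((1 + r) ^ 3)⁻¹ ∧ ((1 + r) ^ 3)⁻¹ ≤ 1 := by
  refine ⟨inv_anti₀ (by positivity) (pow_le_pow_right₀ (by linarith) (by norm_num)), ?_,
    inv_le_one_of_one_le₀ (one_le_pow₀ (by linarith))⟩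
  rw [inv_mul_le_iff₀ (by positivity)]
  have : (1 + r) ^ 4 * ((1 + r) ^ 3)⁻¹ = 1 + r := by field_simp
  rw [this]; linarith

theorem aux_diffint (w : R2 → ℝ) (hw : IsGroundState w) (K : ℝ) (hK : 0 < K)
    (hwb : ∀ x, |w x| ≤ K * ((1 + ‖x‖) ^ 4)⁻¹)
    (hdb : ∀ x, ‖fderiv ℝ w x‖ ≤ K * ((1 + ‖x‖) ^ 4)⁻¹)
    (φ : R2 → ℝ) (hφ : ContDiff ℝ 2 φ) (M N : ℝ) (hM : ∀ x, |φ x| ≤ M)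
    (hN : ∀ x, |lap φ x| ≤ N) :
    Integrable (fun x => (w x + fderiv ℝ w x x) * lap φ x - (2 * w x + (w x + fderiv ℝ w x x) -
      3 * w x ^ 2 * (w x + fderiv ℝ w x x)) * φ x) ∧
    ∫ x, ((w x + fderiv ℝ w x x) * lap φ x - (2 * w x + (w x + fderiv ℝ w x x) -
      3 * w x ^ 2 * (w x + fderiv ℝ w x x)) * φ x) = 0 := by
  have hM0 : 0 ≤ M := (abs_nonneg _).trans (hM 0)
  have hN0 : 0 ≤ N := (abs_nonneg _).trans (hN 0)
  have hdw : Differentiable ℝ w := hw.smooth.differentiable (by norm_num)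
  have hwc := hw.smooth.continuous
  have hlc := aux_lap_cont φ hφ
  have hφc := hφ.continuous
  have hfc : Continuous (fderiv ℝ w) := hw.smooth.continuous_fderiv (by norm_num)
  set s : Set ℝ := Ioo (1/2) (3/2) with hs
  have hsn : s ∈ 𝓝 (1:ℝ) := Ioo_mem_nhds (by norm_num) (by norm_num)
  set W : ℝ → R2 → ℝ := fun l x => l * w (l • x) with hW
  set V : ℝ → R2 → ℝ := fun l x => w (l • x) + l * fderiv ℝ w (l • x) x with hV
  have hb1 : ∀ l ∈ s, ∀ x, |w (l • x)| ≤ 16 * K * ((1 + ‖x‖) ^ 4)⁻¹ := by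
    intro l hl x
    have h := hwb (l • x)
    rw [norm_smul, norm_of_nonneg (by linarith [hl.1] : 0 ≤ l)] at h
    exact h.trans (aux_scale K l hK hl.1 _ (norm_nonneg _))
  have hb2 : ∀ l ∈ s, ∀ x, ‖fderiv ℝ w (l • x)‖ ≤ 16 * K * ((1 + ‖x‖) ^ 4)⁻¹ := by
    intro l hl x
    have h := hdb (l • x)
    rw [norm_smul, norm_of_nonneg (by linarith [hl.1] : 0 ≤ l)] at h
    exact h.trans (aux_scale K l hK hl.1 _ (norm_nonneg _))
  have hlabs : ∀ l ∈ s, |l| ≤ 2 := fun l hl => by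
    rw [abs_of_nonneg (by linarith [hl.1])]; linarith [hl.2]
  have hWb : ∀ l ∈ s, ∀ x, |W l x| ≤ 32 * K * ((1 + ‖x‖) ^ 3)⁻¹ := by
    intro l hl x
    simp only [hW]
    rw [abs_mul]
    have h1 := hb1 l hl x
    have h2 := (aux_b43 ‖x‖ (norm_nonneg x)).1
    calc |l| * |w (l • x)| ≤ 2 * (16 * K * ((1 + ‖x‖) ^ 3)⁻¹) := by
          refine mul_le_mul (hlabs l hl) (h1.trans (by gcongr)) (abs_nonneg _) (by norm_num)
      _ = _ := by ring
  have hVb : ∀ l ∈ s, ∀ x, |V l x| ≤ 48 * K * ((1 + ‖x‖) ^ 3)⁻¹ := by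
    intro l hl x
    simp only [hV]
    obtain ⟨h2, h3, -⟩ := aux_b43 ‖x‖ (norm_nonneg x)
    have h1 : |w (l • x)| ≤ 16 * K * ((1 + ‖x‖) ^ 3)⁻¹ := (hb1 l hl x).trans (by gcongr)
    have h4 : |fderiv ℝ w (l • x) x| ≤ 16 * K * ((1 + ‖x‖) ^ 3)⁻¹ := by
      refine ((fderiv ℝ w (l • x)).le_opNorm x).trans ?_
      calc _ ≤ 16 * K * ((1 + ‖x‖) ^ 4)⁻¹ * ‖x‖ := by gcongr; exact hb2 l hl x
        _ = 16 * K * (((1 + ‖x‖) ^ 4)⁻¹ * ‖x‖) := by ring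
        _ ≤ _ := by gcongr
    refine (abs_add_le _ _).trans ?_
    rw [abs_mul]
    have : |l| * |fderiv ℝ w (l • x) x| ≤ 2 * (16 * K * ((1 + ‖x‖) ^ 3)⁻¹) :=
      mul_le_mul (hlabs l hl) h4 (abs_nonneg _) (by norm_num)
    linarith
  have hWcd : ∀ l, ContDiff ℝ 2 (W l) := fun l =>
    contDiff_const.mul (hw.smooth.comp (contDiff_const_smul l))
  have hWc : ∀ l, Continuous (W l) := fun l => (hWcd l).continuous
  have hWlap : ∀ l x, lap (W l) x = l ^ 2 * W l x - W l x ^ 3 := by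
    intro l x
    have h1 : lap (W l) x = l * lap (fun y => w (l • y)) x :=
      aux_lap_const_mul (fun y => w (l • y)) (hw.smooth.comp (contDiff_const_smul l)) l x
    rw [h1, aux_lap_smul w hw.smooth]
    have h2 := hw.eqn (l • x)
    have h3 : lap w (l • x) = w (l • x) - w (l • x) ^ 3 := by linarith
    rw [h3]; simp only [hW]; ring
  -- Green identity
  set F : ℝ → R2 → ℝ := fun l x => W l x * lap φ x - (l ^ 2 * W l x - W l x ^ 3) * φ x with hF
  have hWi : ∀ l ∈ s, Integrable (W l) := fun l hl => aux_int_of _ (hWc l) _ (hWb l hl)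
  have hcub : ∀ l ∈ s, ∀ x, |l ^ 2 * W l x - W l x ^ 3| ≤
      (4 * (32 * K) + (32 * K) ^ 3) * ((1 + ‖x‖) ^ 3)⁻¹ := by
    intro l hl x
    obtain ⟨-, -, h3⟩ := aux_b43 ‖x‖ (norm_nonneg x)
    have h1 := hWb l hl x
    have h0 : 0 < ((1 + ‖x‖) ^ 3)⁻¹ := by positivity
    have h2 : |W l x| ≤ 32 * K := h1.trans (mul_le_of_le_one_right (by positivity) h3)
    refine (abs_sub _ _).trans ?_
    rw [abs_mul, abs_pow, abs_pow]
    have h4 : |l| ^ 2 ≤ 4 := by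
      calc |l| ^ 2 ≤ 2 ^ 2 := pow_le_pow_left₀ (abs_nonneg _) (hlabs l hl) 2
        _ = 4 := by norm_num
    have h5 : |l| ^ 2 * |W l x| ≤ 4 * (32 * K * ((1 + ‖x‖) ^ 3)⁻¹) :=
      mul_le_mul h4 h1 (abs_nonneg _) (by norm_num)
    have h6 : |W l x| ^ 3 ≤ (32 * K) ^ 3 * ((1 + ‖x‖) ^ 3)⁻¹ := by
      calc |W l x| ^ 3 = |W l x| ^ 2 * |W l x| := by ring
        _ ≤ (32 * K) ^ 2 * (32 * K * ((1 + ‖x‖) ^ 3)⁻¹) := by gcongr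
        _ = _ := by ring
    linarith
  have hlapi : ∀ l ∈ s, Integrable (lap (W l)) := fun l hl => by
    refine aux_int_of _ (aux_lap_cont _ (hWcd l)) (4 * (32 * K) + (32 * K) ^ 3) fun x => ?_
    rw [hWlap]; exact hcub l hl x
  have hfdi : ∀ l ∈ s, Integrable (fun x => fderiv ℝ (W l) x) := fun l hl => by
    refine ((aux_int 4 (by norm_num)).const_mul (4 * (16 * K))).mono'
      ((hWcd l).continuous_fderiv (by norm_num)).aestronglyMeasurable
      (Eventually.of_forall fun x => ?_)
    refine ContinuousLinearMap.opNorm_le_bound _ (by positivity) fun v => ?_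
    have h1 : fderiv ℝ (W l) x v = l * (l * fderiv ℝ w (l • x) v) := by
      have : fderiv ℝ (W l) x = l • fderiv ℝ (fun y => w (l • y)) x :=
        fderiv_const_mul ((hw.smooth.comp (contDiff_const_smul l)).differentiable (by norm_num) x) l
      rw [this, _root_.smul_apply, aux_fd_smul, smul_eq_mul]
    rw [h1, norm_mul, norm_mul, norm_eq_abs]
    have h2 := hlabs l hl
    have h3 := ((fderiv ℝ w (l • x)).le_opNorm v)
    have h4 := hb2 l hl x
    calc |l| * (|l| * ‖fderiv ℝ w (l • x) v‖) ≤
          2 * (2 * ((16 * K * ((1 + ‖x‖) ^ 4)⁻¹) * ‖v‖)) := by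
          gcongr
          exact h3.trans (by gcongr)
      _ = _ := by ring
  have hWl : ∀ l ∈ s, Integrable (fun x => W l x * lap φ x) := fun l hl => by
    refine aux_int_of _ ((hWc l).mul hlc) (32 * K * N) fun x => ?_
    rw [abs_mul]
    calc _ ≤ (32 * K * ((1 + ‖x‖) ^ 3)⁻¹) * N :=
          mul_le_mul (hWb l hl x) (hN x) (abs_nonneg _) (by positivity)
      _ = _ := by ring
  have hWp : ∀ l ∈ s, Integrable (fun x => (l ^ 2 * W l x - W l x ^ 3) * φ x) := fun l hl => by
    have hc := hWc l
    refine aux_int_of _ (by fun_prop) ((4 * (32 * K) + (32 * K) ^ 3) * M) fun x => ?_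
    rw [abs_mul]
    calc _ ≤ ((4 * (32 * K) + (32 * K) ^ 3) * ((1 + ‖x‖) ^ 3)⁻¹) * M :=
          mul_le_mul (hcub l hl x) (hM x) (abs_nonneg _) (by positivity)
      _ = _ := by ring
  have hF0 : ∀ l ∈ s, ∫ x, F l x = 0 := by
    intro l hl
    simp only [hF]
    rw [integral_sub (hWl l hl) (hWp l hl), sub_eq_zero,
      aux_green (W l) φ (hWcd l) hφ M hM (hWi l hl) (hfdi l hl) (hlapi l hl) (hWl l hl)]
    simp_rw [hWlap]
  set F' : ℝ → R2 → ℝ := fun l x => V l x * lap φ x -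
    (2 * l * W l x + l ^ 2 * V l x - 3 * W l x ^ 2 * V l x) * φ x with hF'
  have hWd : ∀ l x, HasDerivAt (fun l => W l x) (V l x) l := by
    intro l x
    have h0 : HasDerivAt (fun t : ℝ => t • x) x l := by
      simpa using ((hasDerivAt_id l).smul_const x)
    have h1 := (hdw (l • x)).hasFDerivAt.comp_hasDerivAt l h0
    have h2 := (hasDerivAt_id' l).mul h1
    refine h2.congr_deriv ?_
    simp [hV]
  have hFd : ∀ l x, HasDerivAt (fun l => F l x) (F' l x) l := by
    intro l x
    have a := hWd l x
    have b := (a.mul_const (lap φ x)).fun_sub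
      (((((hasDerivAt_id' l).fun_pow 2).fun_mul a).fun_sub (a.fun_pow 3)).mul_const (φ x))
    refine b.congr_deriv ?_
    simp only [hF', Nat.cast_ofNat, Nat.reduceSub, pow_one, mul_one]
  have hF'b : ∀ l ∈ s, ∀ x, ‖F' l x‖ ≤ (48 * K * N +
      (4 * (32 * K) + 4 * (48 * K) + 3 * (32 * K) ^ 2 * (48 * K)) * M) * ((1 + ‖x‖) ^ 3)⁻¹ := by
    intro l hl x
    obtain ⟨-, -, h3⟩ := aux_b43 ‖x‖ (norm_nonneg x)
    set b := ((1 + ‖x‖) ^ 3)⁻¹ with hb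
    have h0 : 0 < b := by positivity
    have h1 : |W l x| ≤ 32 * K * b := hWb l hl x
    have hv : |V l x| ≤ 48 * K * b := hVb l hl x
    have h2 : |W l x| ≤ 32 * K := h1.trans (mul_le_of_le_one_right (by positivity) h3)
    have hl2 := hlabs l hl
    have h4 : |l| ^ 2 ≤ 4 := by
      calc |l| ^ 2 ≤ 2 ^ 2 := pow_le_pow_left₀ (abs_nonneg _) hl2 2
        _ = 4 := by norm_num
    have c1 : |V l x * lap φ x| ≤ 48 * K * b * N := by
      rw [abs_mul]; exact mul_le_mul hv (hN x) (abs_nonneg _) (by positivity)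
    have c2 : |2 * l * W l x| ≤ 2 * 2 * (32 * K * b) := by
      rw [abs_mul, abs_mul, abs_two]; gcongr
    have c3 : |l ^ 2 * V l x| ≤ 4 * (48 * K * b) := by
      rw [abs_mul, abs_pow]; gcongr
    have c4 : |3 * W l x ^ 2 * V l x| ≤ 3 * (32 * K) ^ 2 * (48 * K * b) := by
      rw [abs_mul, abs_mul, abs_pow, abs_of_pos (by norm_num : (0:ℝ) < 3)]; gcongr
    have c5 : |(2 * l * W l x + l ^ 2 * V l x - 3 * W l x ^ 2 * V l x)| ≤
        2 * 2 * (32 * K * b) + 4 * (48 * K * b) + 3 * (32 * K) ^ 2 * (48 * K * b) := by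
      refine (abs_sub _ _).trans ?_
      refine (add_le_add_left (abs_add_le _ _) _).trans ?_
      linarith
    have c6 : |(2 * l * W l x + l ^ 2 * V l x - 3 * W l x ^ 2 * V l x) * φ x| ≤
        (2 * 2 * (32 * K * b) + 4 * (48 * K * b) + 3 * (32 * K) ^ 2 * (48 * K * b)) * M := by
      rw [abs_mul]; exact mul_le_mul c5 (hM x) (abs_nonneg _) (by positivity)
    rw [norm_eq_abs]
    refine (abs_sub _ _).trans ((add_le_add c1 c6).trans (le_of_eq ?_))
    ring
  have h1s : (1:ℝ) ∈ s := ⟨by norm_num, by norm_num⟩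
  obtain ⟨r1, r2⟩ := hasDerivAt_integral_of_dominated_loc_of_deriv_le (μ := (volume : Measure R2))
    (F := F) (F' := F') (x₀ := (1:ℝ)) hsn
    (Eventually.of_forall fun l => by
      have := hWc l
      exact Continuous.aestronglyMeasurable (by simp only [hF]; fun_prop))
    ((hWl 1 h1s).sub (hWp 1 h1s))
    (by
      have := hWc 1
      have hv : Continuous (V 1) := by simp only [hV]; fun_prop
      exact Continuous.aestronglyMeasurable (by simp only [hF']; fun_prop))
    (Eventually.of_forall fun x l hl => hF'b l hl x)
    ((aux_int 3 le_rfl).const_mul _)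
    (Eventually.of_forall fun x l _ => hFd l x)
  have hz : HasDerivAt (fun l => ∫ x, F l x) 0 1 := by
    refine (hasDerivAt_const (1:ℝ) (0:ℝ)).congr_of_eventuallyEq ?_
    filter_upwards [hsn] with l hl
    exact hF0 l hl
  have hfin := r2.unique hz
  have hEq : F' 1 = fun x => (w x + fderiv ℝ w x x) * lap φ x - (2 * w x + (w x + fderiv ℝ w x x) -
      3 * w x ^ 2 * (w x + fderiv ℝ w x x)) * φ x := by
    funext x
    simp [hF', hV, hW]
  rw [hEq] at r1 hfin
  exact ⟨r1, hfin⟩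

/-- Lemma 3.3, identity `I = 0`: `∫ (2wψ₄ + ψ₂²) = 0`. -/
theorem identity_I_vanishes
    (w : R2 → ℝ) (hw : IsGroundState w)
    -- `ψ₂ = -(1/2)(w + x·∇w)`
    (ψ2 : R2 → ℝ) (hψ2 : ∀ x, ψ2 x = -(1 / 2) * (w x + xgrad w x))
    -- `ψ₄`: the unique bounded solution of `∇ψ₄(0)=0`, `Lψ₄ = 3wψ₂² + ψ₂`
    (ψ4 : R2 → ℝ)
    (hψ4s : ContDiff ℝ 2 ψ4) (hψ4b : BddFun ψ4) (hψ4g : gradient ψ4 0 = 0)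
    (hψ4e : ∀ x, Lop w ψ4 x = 3 * w x * (ψ2 x) ^ 2 + ψ2 x)
    (hint : Integrable fun x => 2 * w x * ψ4 x + (ψ2 x) ^ 2) :
    (∫ x, (2 * w x * ψ4 x + (ψ2 x) ^ 2)) = 0 := by
  obtain ⟨f, p, hA, hB, hF, hC, hD, hpc, hpos⟩ := aux_radial w hw
  obtain ⟨K, hK, kf, kp, kw, kd⟩ := aux_bounds w hw f p hA hF hC hD hpc hpos
  obtain ⟨M, hM⟩ := hψ4b
  have hM0 : 0 ≤ M := (abs_nonneg _).trans (hM 0)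
  have hx : ∀ x, xgrad w x = fderiv ℝ w x x := by
    intro x
    unfold xgrad gradient
    rw [real_inner_comm, InnerProductSpace.toDual_symm_apply]
  have hP : ∀ x, ψ2 x = -(1/2) * (w x + fderiv ℝ w x x) := fun x => by rw [hψ2, hx]
  have hwc := hw.smooth.continuous
  have hfc : Continuous (fderiv ℝ w) := hw.smooth.continuous_fderiv (by norm_num)
  have hPc : Continuous ψ2 := by
    rw [show ψ2 = fun x => -(1/2) * (w x + fderiv ℝ w x x) from funext hP]
    fun_prop
  have hw3 : ∀ x, |w x| ≤ K * ((1 + ‖x‖) ^ 3)⁻¹ := fun x =>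
    (kw x).trans (by have := (aux_b43 ‖x‖ (norm_nonneg x)).1; gcongr)
  have hPb : ∀ x, |ψ2 x| ≤ K * ((1 + ‖x‖) ^ 3)⁻¹ := by
    intro x
    have h4 : |fderiv ℝ w x x| ≤ K * ((1 + ‖x‖) ^ 3)⁻¹ := by
      refine ((fderiv ℝ w x).le_opNorm x).trans ?_
      calc _ ≤ K * ((1 + ‖x‖) ^ 4)⁻¹ * ‖x‖ := by gcongr; exact kd x
        _ = K * (((1 + ‖x‖) ^ 4)⁻¹ * ‖x‖) := by ring
        _ ≤ _ := by have := (aux_b43 ‖x‖ (norm_nonneg x)).2.1; gcongr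
    rw [hP, abs_mul, abs_neg, abs_of_pos (by norm_num : (0:ℝ) < 1/2)]
    have := abs_add_le (w x) (fderiv ℝ w x x)
    linarith [hw3 x]
  have hb1 : ∀ x : R2, K * ((1 + ‖x‖) ^ 3)⁻¹ ≤ K := fun x =>
    mul_le_of_le_one_right hK.le (aux_b43 ‖x‖ (norm_nonneg x)).2.2
  have hlap : ∀ x, lap ψ4 x = (1 - 3 * w x ^ 2) * ψ4 x - 3 * w x * ψ2 x ^ 2 - ψ2 x := by
    intro x
    have := hψ4e x
    unfold Lop at this
    linarith
  have hlapb : ∀ x, |lap ψ4 x| ≤ (1 + 3 * K ^ 2) * M + 3 * K * K ^ 2 + K := by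
    intro x
    have h1 : |w x| ≤ K := (hw3 x).trans (hb1 x)
    have h2 : |ψ2 x| ≤ K := (hPb x).trans (hb1 x)
    have c0 : |1 - 3 * w x ^ 2| ≤ 1 + 3 * K ^ 2 := by
      refine (abs_sub _ _).trans ?_
      rw [abs_one, abs_mul, abs_pow, abs_of_pos (by norm_num : (0:ℝ) < 3)]
      gcongr
    have c1 : |(1 - 3 * w x ^ 2) * ψ4 x| ≤ (1 + 3 * K ^ 2) * M := by
      rw [abs_mul]; exact mul_le_mul c0 (hM x) (abs_nonneg _) (by positivity)
    have c2 : |3 * w x * ψ2 x ^ 2| ≤ 3 * K * K ^ 2 := by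
      rw [abs_mul, abs_mul, abs_pow, abs_of_pos (by norm_num : (0:ℝ) < 3)]
      gcongr
    rw [hlap]
    refine (abs_sub _ _).trans (add_le_add ((abs_sub _ _).trans (add_le_add c1 c2)) h2)
  obtain ⟨g1, g2⟩ := aux_diffint w hw K hK kw kd ψ4 hψ4s M _ hM hlapb
  have hpt : ∀ x, (w x + fderiv ℝ w x x) * lap ψ4 x - (2 * w x + (w x + fderiv ℝ w x x) -
      3 * w x ^ 2 * (w x + fderiv ℝ w x x)) * ψ4 x =
      6 * w x * ψ2 x ^ 3 + 2 * ψ2 x ^ 2 - 2 * w x * ψ4 x := by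
    intro x
    have : w x + fderiv ℝ w x x = -2 * ψ2 x := by rw [hP]; ring
    rw [this, hlap]; ring
  simp_rw [hpt] at g1 g2
  have hQi : Integrable (fun x => 6 * w x * ψ2 x ^ 3 + 3 * ψ2 x ^ 2) := by
    refine aux_int_of _ (by fun_prop) (6 * K * K ^ 2 * K + 3 * K * K) fun x => ?_
    set b := ((1 + ‖x‖) ^ 3)⁻¹
    have h1 : |w x| ≤ K := (hw3 x).trans (hb1 x)
    have h2 : |ψ2 x| ≤ K := (hPb x).trans (hb1 x)
    have h3 := hPb x
    refine (abs_add_le _ _).trans ?_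
    rw [abs_mul, abs_mul, abs_mul, abs_pow, abs_pow, abs_of_pos (by norm_num : (0:ℝ) < 3),
      abs_of_pos (by norm_num : (0:ℝ) < 6)]
    calc 6 * |w x| * |ψ2 x| ^ 3 + 3 * |ψ2 x| ^ 2 =
        6 * |w x| * |ψ2 x| ^ 2 * |ψ2 x| + 3 * |ψ2 x| * |ψ2 x| := by ring
      _ ≤ 6 * K * K ^ 2 * (K * b) + 3 * K * (K * b) := by gcongr
      _ = _ := by ring
  have hQr : (fun x => 6 * w x * ψ2 x ^ 3 + 3 * ψ2 x ^ 2) = fun x : R2 =>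
      (fun r => 6 * f r * (-(1/2) * (f r + r * p r)) ^ 3 +
      3 * (-(1/2) * (f r + r * p r)) ^ 2) ‖x‖ := by
    funext x
    rw [hP, hB, hA]
  have hQ0 : ∫ x, (6 * w x * ψ2 x ^ 3 + 3 * ψ2 x ^ 2) = 0 := by
    rw [hQr] at hQi
    have i := (integrable_fun_norm_addHaar (volume : Measure R2) (f := (fun r => 6 * f r * (-(1/2) * (f r + r * p r)) ^ 3 +
      3 * (-(1/2) * (f r + r * p r)) ^ 2))).1 hQi
    rw [aux_finrank] at i
    simp only [Nat.add_one_sub_one, pow_one, smul_eq_mul] at i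
    rw [hQr, integral_fun_norm_addHaar (volume : Measure R2) (fun r => 6 * f r * (-(1/2) * (f r + r * p r)) ^ 3 +
      3 * (-(1/2) * (f r + r * p r)) ^ 2), aux_finrank]
    simp only [Nat.add_one_sub_one, pow_one, smul_eq_mul]
    rw [aux_1d f p K hC hD hpc kf kp i]
    simp
  have e : (fun x => 2 * w x * ψ4 x + ψ2 x ^ 2) = fun x => (6 * w x * ψ2 x ^ 3 + 3 * ψ2 x ^ 2) -
      (6 * w x * ψ2 x ^ 3 + 2 * ψ2 x ^ 2 - 2 * w x * ψ4 x) := by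
    funext x; ring
  rw [e, integral_sub hQi g1, hQ0, g2, sub_zero]
end
end
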